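/- arXiv:2310.12136 — 4 statements merged into one kernel-verified Lean document; each statement's English description precedes it below -/
import Mathlib

section
/- Let ζ be a non-primitive binary substitution of constant length q ≥ 2. Then for every y ∈ X_ζ, every m, ℓ ∈ ℕ and every ε > 0, the limits as n → ∞ of the correlation sum C_ℓ(y^{(m)}, n, ε), of the recurrence rate RR_ℓ(y^{(m)}, n, ε) and of the determinism DET_ℓ(y^{(m)}, n, ε) exist and are all equal to 1, and the average line length L_ℓ(y^{(m)}, n, ε) tends to ∞ as n → ∞. -/
open Filter Topology MeasureTheory

namespace RQA

/-- The standard metric on symbolic sequences over an alphabet `α`: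
`ρ(x,y) = 2^{-min{i : x i ≠ y i}}` for `x ≠ y` and `ρ(x,x) = 0`. -/
noncomputable def seqDist {α : Type*} (x y : ℕ → α) : ℝ :=
  haveI := Classical.propDecidable (x = y)
  if x = y then 0 else (2 : ℝ) ^ (-((sInf {i : ℕ | x i ≠ y i} : ℕ) : ℤ))

/-- The (one-sided) shift on sequences. -/
def shift {α : Type*} (x : ℕ → α) : ℕ → α := fun i => x (i + 1)

/-- The embedded sequence `x^{(m)}`, a sequence over the alphabet `α^m`. -/
def embedSeq {α : Type*} (m : ℕ) (x : ℕ → α) : ℕ → (Fin m → α) :=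
  fun j t => x (j + (t : ℕ))

section RQAdefs

variable {X : Type*} (d : X → X → ℝ) (f : X → X) (x : X)

/-- The entry of the recurrence plot at `(i,j)` equals `1`. -/
def RPone (ε : ℝ) (i j : ℕ) : Prop := d (f^[i] x) (f^[j] x) ≤ ε

/-- `(i, j, l)` is a diagonal line in the recurrence plot `RP(x, n, ε)`. -/
def IsLine (n : ℕ) (ε : ℝ) (i j l : ℕ) : Prop :=
  1 ≤ l ∧ i + l ≤ n ∧ j + l ≤ n ∧ i ≠ j ∧
  (∀ h, h < l → RPone d f x ε (i + h) (j + h)) ∧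
  (0 < i → 0 < j → ¬ RPone d f x ε (i - 1) (j - 1)) ∧
  (max i j + l < n → ¬ RPone d f x ε (i + l) (j + l))

/-- `N_l(x, n, ε)`: the number of diagonal lines of length exactly `l`. -/
noncomputable def Nlines (n : ℕ) (ε : ℝ) (l : ℕ) : ℕ :=
  Set.ncard {p : ℕ × ℕ | IsLine d f x n ε p.1 p.2 l}

/-- `P_l(x, n, ε) = N_l/(n² − n)`. -/
noncomputable def Pline (n : ℕ) (ε : ℝ) (l : ℕ) : ℝ :=
  (Nlines d f x n ε l : ℝ) / ((n : ℝ) ^ 2 - (n : ℝ))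

/-- `P≥_ℓ(x, n, ε) = Σ_{l ≥ ℓ} P_l`. -/
noncomputable def PlineGe (n : ℕ) (ε : ℝ) (ℓ : ℕ) : ℝ :=
  ∑' k : ℕ, Pline d f x n ε (ℓ + k)

/-- The recurrence rate `RR_ℓ(x, n, ε) = Σ_{l ≥ ℓ} l · P_l`. -/
noncomputable def RRate (n : ℕ) (ε : ℝ) (ℓ : ℕ) : ℝ :=
  ∑' k : ℕ, ((ℓ + k : ℕ) : ℝ) * Pline d f x n ε (ℓ + k)

/-- The determinism `DET_ℓ(x, n, ε) = RR_ℓ/RR_1`. -/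
noncomputable def DETrm (n : ℕ) (ε : ℝ) (ℓ : ℕ) : ℝ :=
  RRate d f x n ε ℓ / RRate d f x n ε 1

/-- The average line length `L_ℓ(x, n, ε) = RR_ℓ/P≥_ℓ`. -/
noncomputable def LAvg (n : ℕ) (ε : ℝ) (ℓ : ℕ) : ℝ :=
  RRate d f x n ε ℓ / PlineGe d f x n ε ℓ

/-- The entropy of line lengths
`ENT_ℓ(x, n, ε) = log P≥_ℓ − (1/P≥_ℓ)·Σ_{l≥ℓ} P_l · log P_l` (with `0·log 0 = 0`). -/
noncomputable def ENTln (n : ℕ) (ε : ℝ) (ℓ : ℕ) : ℝ :=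
  Real.log (PlineGe d f x n ε ℓ) -
    (PlineGe d f x n ε ℓ)⁻¹ *
      ∑' k : ℕ, Pline d f x n ε (ℓ + k) * Real.log (Pline d f x n ε (ℓ + k))

/-- The correlation sum
`C_ℓ(x, n, ε) = n^{-2}·#{(i,j) ∈ [0,n)² : d_ℓ(f^i x, f^j x) ≤ ε}`,
where `d_ℓ` is the Bowen metric. -/
noncomputable def corrSum (ℓ n : ℕ) (ε : ℝ) : ℝ :=
  (Set.ncard {p : ℕ × ℕ | p.1 < n ∧ p.2 < n ∧
      ∀ k, k < ℓ → d (f^[p.1 + k] x) (f^[p.2 + k] x) ≤ ε} : ℝ) / (n : ℝ) ^ 2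

end RQAdefs

/-- The extension of a substitution to a morphism of the free monoid of finite words. -/
def substWord (ζ : Bool → List Bool) : List Bool → List Bool :=
  fun w => w.foldr (fun a r => ζ a ++ r) []

/-- `ζ` is a (binary) substitution of constant length `q ≥ 2`. -/
def IsConstLenSubst (ζ : Bool → List Bool) (q : ℕ) : Prop :=
  2 ≤ q ∧ ∀ a : Bool, (ζ a).length = q

/-- The language `L_ζ`: subwords of the words `ζ^k(a)`, `a ∈ A`, `k ≥ 1`. -/
def substLang (ζ : Bool → List Bool) : Set (List Bool) :=
  {w | ∃ a : Bool, ∃ k : ℕ, 1 ≤ k ∧ w <:+: (substWord ζ)^[k] [a]}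

/-- The substitution subshift `X_ζ`. -/
def SubstShift (ζ : Bool → List Bool) : Set (ℕ → Bool) :=
  {y | ∀ n : ℕ, (List.ofFn fun t : Fin n => y (t : ℕ)) ∈ substLang ζ}

/-- `ζ` is primitive. -/
def IsPrimitive (ζ : Bool → List Bool) : Prop :=
  ∃ k : ℕ, 1 ≤ k ∧ ∀ a b : Bool, b ∈ (substWord ζ)^[k] [a]

/-- `ζ` is aperiodic: `X_ζ` contains a non-periodic sequence. -/
def IsAperiodic (ζ : Bool → List Bool) : Prop :=
  ∃ y ∈ SubstShift ζ, ∀ p : ℕ, 1 ≤ p → ∃ i : ℕ, y (i + p) ≠ y i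

/-- The action of a constant length-`q` substitution on infinite sequences. -/
def substSeq (ζ : Bool → List Bool) (q : ℕ) (x : ℕ → Bool) : ℕ → Bool :=
  fun i => (ζ (x (i / q))).getD (i % q) false

/-- `(i, j, l)` is a line in the infinite symbolic recurrence plot `RP(x, ∞, ε₀)`. -/
def IsInfLine (x : ℕ → Bool) (i j l : ℕ) : Prop :=
  1 ≤ l ∧ i ≠ j ∧ (∀ h, h < l → x (i + h) = x (j + h)) ∧
  (0 < i → 0 < j → x (i - 1) ≠ x (j - 1)) ∧ x (i + l) ≠ x (j + l)

/-- `K_l`: the set of starting points `(i,j)`, `i,j ≥ 1`, of inner lines of length `l`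
in the infinite symbolic recurrence plot. -/
def Kset (x : ℕ → Bool) (l : ℕ) : Set (ℕ × ℕ) :=
  {p | 1 ≤ p.1 ∧ 1 ≤ p.2 ∧ IsInfLine x p.1 p.2 l}

/-- `#(M ∩ [0,n)²)/n²`. -/
noncomputable def densCount (M : Set (ℕ × ℕ)) (n : ℕ) : ℝ :=
  (Set.ncard (M ∩ {p : ℕ × ℕ | p.1 < n ∧ p.2 < n}) : ℝ) / (n : ℝ) ^ 2

/-- `M ⊆ ℕ²` has asymptotic density `a`. -/
def HasDens (M : Set (ℕ × ℕ)) (a : ℝ) : Prop :=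
  Tendsto (densCount M) atTop (𝓝 a)

/-- `δ_l(n) = #(K_l ∩ [1,n)²)/(n² − n)`. -/
noncomputable def deltaK (x : ℕ → Bool) (l n : ℕ) : ℝ :=
  (Set.ncard (Kset x l ∩ {p : ℕ × ℕ | p.1 < n ∧ p.2 < n}) : ℝ) / ((n : ℝ) ^ 2 - (n : ℝ))

/-- `M` is a minimal subset of the subshift `Y`. -/
def IsMinimalSubset (Y M : Set (ℕ → Bool)) : Prop :=
  M ⊆ Y ∧ M.Nonempty ∧ IsClosed M ∧ (∀ z ∈ M, shift z ∈ M) ∧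
  ∀ M' : Set (ℕ → Bool), M' ⊆ M → M'.Nonempty → IsClosed M' →
    (∀ z ∈ M', shift z ∈ M') → M' = M

end RQA

open RQA

/-!
Let `S r` be the normalised number of off-diagonal runs of `r` ones in the recurrence plot, maximal
or not. A diagonal line of length `l` is a run of length `l` that extends neither backwards nor
forwards, so inclusion–exclusion gives `P_l = S l - 2 S (l + 1) + S (l + 2)`, and telescoping gives
`P≥_ℓ = S ℓ - S (ℓ + 1)` and `RR_ℓ = ℓ S ℓ - (ℓ - 1) S (ℓ + 1)`. As `S r` and `C_r` differ by
`O(1/n)`, all four limits follow once `C_r → 1` for every `r`; here `L_ℓ → ∞` because `P≥_ℓ → 0`.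

For `C_r → 1` it is enough that some letter `a` fills `y` up to a set of density zero, since then
almost all pairs of windows of any fixed length consist of `a` only. If `ζ` is not primitive, either
each `ζ c` is a power of a letter and `y` is constant, or there is a letter `b` which does not occur
in the image of the other letter and occurs `p < q` times in `ζ b`. In the latter case `b` occurs at
most `p ^ k` times in each block `ζ^k c`, of length `q ^ k`, so its density in `y` is zero.
-/

namespace RQA

lemma tsum_add_sub_add_succ {G : Type*} [AddCommGroup G] [TopologicalSpace G] {b : ℕ → G} {N : ℕ}
    (hb : ∀ l, N ≤ l → b l = 0) (ℓ : ℕ) : ∑' k, (b (ℓ + k) - b (ℓ + k + 1)) = b ℓ := by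
  have hvanish (k : ℕ) (hk : k ∉ Finset.range N) : b (ℓ + k) - b (ℓ + k + 1) = 0 := by
    have hNk : N ≤ k := by simpa using hk
    rw [hb (ℓ + k) (by lia), hb (ℓ + k + 1) (by lia), sub_zero]
  calc ∑' k, (b (ℓ + k) - b (ℓ + k + 1))
      = ∑ k ∈ Finset.range N, (b (ℓ + k) - b (ℓ + (k + 1))) := tsum_eq_sum hvanish
    _ = b ℓ - b (ℓ + N) := Finset.sum_range_sub' (fun k => b (ℓ + k)) N
    _ = b ℓ := by rw [hb (ℓ + N) (Nat.le_add_left N ℓ), sub_zero]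

section Segments

variable {X : Type*} (d : X → X → ℝ) (f : X → X) (x : X) (n : ℕ) (ε : ℝ)

/-- The pairs `(i, j)` such that `f^i(x)` and `f^j(x)` are `ε`-close in the Bowen metric `d_r`,
i.e. the recurrence plot has `r` consecutive ones along the diagonal from `(i, j)`. -/
def bowenPairs (r : ℕ) : Set (ℕ × ℕ) :=
  {p | ∀ h < r, RPone d f x ε (p.1 + h) (p.2 + h)}

/-- The starting points of the off-diagonal runs of `r` consecutive ones inside `RP(x, n, ε)`.
The runs need not be maximal, so every diagonal line of length `l ≥ r` contributes `l - r + 1`. -/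
def diagSegments (r : ℕ) : Set (ℕ × ℕ) :=
  {p | p.1 ≠ p.2 ∧ p.1 + r ≤ n ∧ p.2 + r ≤ n ∧ p ∈ bowenPairs d f x ε r}

/-- The number of `diagSegments` of length `r`, normalised by `n² - n` as `Pline` is. -/
noncomputable def segmentRate (r : ℕ) : ℝ :=
  ((diagSegments d f x n ε r).ncard : ℝ) / ((n : ℝ) ^ 2 - n)

variable {d f x n ε}

lemma finite_diagSegments (r : ℕ) : (diagSegments d f x n ε r).Finite :=
  (Set.finite_Iic (n, n)).subset fun _ ⟨_, h₁, h₂, _⟩ =>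
    ⟨(Nat.le_add_right _ r).trans h₁, (Nat.le_add_right _ r).trans h₂⟩

lemma diagSegments_eq_empty {r : ℕ} (hr : n ≤ r) : diagSegments d f x n ε r = ∅ :=
  Set.eq_empty_of_forall_notMem fun _ ⟨hne, h₁, h₂, _⟩ => hne (by lia)

lemma mem_diagSegments_succ_iff_end {r : ℕ} {p : ℕ × ℕ} :
    p ∈ diagSegments d f x n ε (r + 1) ↔
      p ∈ diagSegments d f x n ε r ∧ max p.1 p.2 + r < n ∧
        RPone d f x ε (p.1 + r) (p.2 + r) := by
  simp only [diagSegments, bowenPairs, Set.mem_ofPred_eq, Nat.forall_lt_succ_right]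
  grind

lemma mem_diagSegments_succ_iff_start {r : ℕ} {p : ℕ × ℕ} :
    p ∈ diagSegments d f x n ε (r + 1) ↔
      RPone d f x ε p.1 p.2 ∧ p + 1 ∈ diagSegments d f x n ε r := by
  simp only [diagSegments, bowenPairs, Set.mem_ofPred_eq, Nat.forall_lt_succ_left,
    Prod.fst_add, Prod.snd_add, Prod.fst_one, Prod.snd_one, add_zero, add_right_comm _ 1,
    ← add_assoc]
  grind

lemma diagSegments_succ_subset (r : ℕ) :
    diagSegments d f x n ε (r + 1) ⊆ diagSegments d f x n ε r :=
  fun _ hp => (mem_diagSegments_succ_iff_end.1 hp).1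

lemma diagSegments_succ_ssubset {r : ℕ} (h : (diagSegments d f x n ε r).Nonempty) :
    diagSegments d f x n ε (r + 1) ⊂ diagSegments d f x n ε r := by
  obtain ⟨p, hp, hmax⟩ := (finite_diagSegments r).exists_maximal h
  refine (Set.ssubset_iff_of_subset (diagSegments_succ_subset r)).2 ⟨p, hp, fun hp' => ?_⟩
  have hle : p + 1 ≤ p :=
    hmax (mem_diagSegments_succ_iff_start.1 hp').2 (le_add_of_nonneg_right zero_le_one)
  exact Nat.not_succ_le_self _ hle.1

lemma ncard_diagSegments_diff_succ (r : ℕ) :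
    ((diagSegments d f x n ε r \ diagSegments d f x n ε (r + 1)).ncard : ℝ) =
      (diagSegments d f x n ε r).ncard - (diagSegments d f x n ε (r + 1)).ncard :=
  Set.cast_ncard_sdiff (diagSegments_succ_subset r) (finite_diagSegments r)

lemma setOf_isLine_eq {l : ℕ} (hl : 1 ≤ l) :
    {p : ℕ × ℕ | IsLine d f x n ε p.1 p.2 l} =
      (diagSegments d f x n ε l \ diagSegments d f x n ε (l + 1)) \
        (· + 1) '' diagSegments d f x n ε (l + 1) := by
  ext ⟨i, j⟩
  have hshift : (i, j) ∈ (· + 1) '' diagSegments d f x n ε (l + 1) ↔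
      0 < i ∧ 0 < j ∧ RPone d f x ε (i - 1) (j - 1) ∧ (i, j) ∈ diagSegments d f x n ε l := by
    simp only [Set.mem_image, mem_diagSegments_succ_iff_start]
    constructor
    · rintro ⟨⟨i', j'⟩, ⟨hone, hmem⟩, heq⟩
      obtain ⟨rfl, rfl⟩ := Prod.mk.inj heq
      exact ⟨i'.succ_pos, j'.succ_pos, hone, hmem⟩
    · rintro ⟨hi, hj, hone, hmem⟩
      have heq : ((i - 1, j - 1) + 1 : ℕ × ℕ) = (i, j) :=
        Prod.ext (Nat.sub_add_cancel hi) (Nat.sub_add_cancel hj)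
      exact ⟨(i - 1, j - 1), ⟨hone, heq ▸ hmem⟩, heq⟩
  rw [Set.mem_sdiff, Set.mem_sdiff, hshift, mem_diagSegments_succ_iff_end]
  simp only [IsLine, diagSegments, bowenPairs, Set.mem_ofPred_eq]
  grind

lemma diagSegments_diff_inter_image (l : ℕ) :
    (diagSegments d f x n ε l \ diagSegments d f x n ε (l + 1)) ∩
        (· + 1) '' diagSegments d f x n ε (l + 1) =
      (· + 1) '' (diagSegments d f x n ε (l + 1) \ diagSegments d f x n ε (l + 2)) := by
  ext p
  constructor
  · rintro ⟨⟨-, hp⟩, p', hp', rfl⟩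
    exact ⟨p', ⟨hp', fun h => hp (mem_diagSegments_succ_iff_start.1 h).2⟩, rfl⟩
  · rintro ⟨p', ⟨hp', hnot⟩, rfl⟩
    have ⟨hone, hmem⟩ := mem_diagSegments_succ_iff_start.1 hp'
    exact ⟨⟨hmem, fun h => hnot (mem_diagSegments_succ_iff_start.2 ⟨hone, h⟩)⟩, p', hp', rfl⟩

lemma natCast_nlines_eq {l : ℕ} (hl : 1 ≤ l) :
    (Nlines d f x n ε l : ℝ) =
      (diagSegments d f x n ε l).ncard - 2 * (diagSegments d f x n ε (l + 1)).ncard +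
        (diagSegments d f x n ε (l + 2)).ncard := by
  have hsplit := Set.ncard_inter_add_ncard_sdiff_eq_ncard
    (diagSegments d f x n ε l \ diagSegments d f x n ε (l + 1))
    ((· + 1) '' diagSegments d f x n ε (l + 1)) (finite_diagSegments l).sdiff
  rw [diagSegments_diff_inter_image, Set.ncard_image_of_injective _ (add_left_injective 1),
    ← setOf_isLine_eq hl] at hsplit
  have hreal := congrArg (Nat.cast : ℕ → ℝ) hsplit
  rw [Nat.cast_add, ncard_diagSegments_diff_succ, ncard_diagSegments_diff_succ] at hreal
  rw [Nlines]
  linarith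

lemma pline_eq {l : ℕ} (hl : 1 ≤ l) :
    Pline d f x n ε l =
      segmentRate d f x n ε l - 2 * segmentRate d f x n ε (l + 1) +
        segmentRate d f x n ε (l + 2) := by
  simp only [Pline, segmentRate, natCast_nlines_eq hl]
  ring

lemma segmentRate_eq_zero {r : ℕ} (hr : n ≤ r) : segmentRate d f x n ε r = 0 := by
  simp [segmentRate, diagSegments_eq_empty hr]

lemma plineGe_eq {ℓ : ℕ} (hℓ : 1 ≤ ℓ) :
    PlineGe d f x n ε ℓ = segmentRate d f x n ε ℓ - segmentRate d f x n ε (ℓ + 1) := by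
  let b (l : ℕ) : ℝ := segmentRate d f x n ε l - segmentRate d f x n ε (l + 1)
  have hb (l : ℕ) (hl : n ≤ l) : b l = 0 := by
    simp only [b, segmentRate_eq_zero hl, segmentRate_eq_zero (hl.trans l.le_succ), sub_zero]
  have hPline (k : ℕ) : Pline d f x n ε (ℓ + k) = b (ℓ + k) - b (ℓ + k + 1) := by
    rw [pline_eq (hℓ.trans (Nat.le_add_right ℓ k))]
    ring
  exact (tsum_congr hPline).trans (tsum_add_sub_add_succ hb ℓ)

lemma rRate_eq {ℓ : ℕ} (hℓ : 1 ≤ ℓ) :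
    RRate d f x n ε ℓ =
      ℓ * segmentRate d f x n ε ℓ - (ℓ - 1) * segmentRate d f x n ε (ℓ + 1) := by
  let b (l : ℕ) : ℝ := l * segmentRate d f x n ε l - (l - 1) * segmentRate d f x n ε (l + 1)
  have hb (l : ℕ) (hl : n ≤ l) : b l = 0 := by
    simp only [b, segmentRate_eq_zero hl, segmentRate_eq_zero (hl.trans l.le_succ), mul_zero,
      sub_zero]
  have hPline (k : ℕ) :
      ((ℓ + k : ℕ) : ℝ) * Pline d f x n ε (ℓ + k) = b (ℓ + k) - b (ℓ + k + 1) := by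
    rw [pline_eq (hℓ.trans (Nat.le_add_right ℓ k))]
    simp only [b]
    push_cast
    ring
  exact (tsum_congr hPline).trans (tsum_add_sub_add_succ hb ℓ)

lemma segmentRate_succ_lt {r : ℕ} (h : 0 < segmentRate d f x n ε r) :
    segmentRate d f x n ε (r + 1) < segmentRate d f x n ε r := by
  have hden : (0 : ℝ) < (n : ℝ) ^ 2 - n := by
    by_contra! hneg
    exact h.not_ge (div_nonpos_of_nonneg_of_nonpos (Nat.cast_nonneg _) hneg)
  have hne : (diagSegments d f x n ε r).Nonempty := by
    refine Set.nonempty_of_ncard_ne_zero fun h0 => h.ne' ?_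
    rw [segmentRate, h0, Nat.cast_zero, zero_div]
  refine div_lt_div_of_pos_right (Nat.cast_lt.2 ?_) hden
  exact Set.ncard_lt_ncard (diagSegments_succ_ssubset hne) (finite_diagSegments r)

end Segments

lemma finite_inter_square (M : Set (ℕ × ℕ)) (n : ℕ) : (M ∩ {p | p.1 < n ∧ p.2 < n}).Finite :=
  ((Set.finite_Iio n).prod (Set.finite_Iio n)).subset fun _ hp => hp.2

lemma densCount_le_one (M : Set (ℕ × ℕ)) (n : ℕ) : densCount M n ≤ 1 := by
  have hcard : (M ∩ {p | p.1 < n ∧ p.2 < n}).ncard ≤ (Set.Iio n ×ˢ Set.Iio n).ncard :=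
    Set.ncard_le_ncard (fun _ hp => hp.2) ((Set.finite_Iio n).prod (Set.finite_Iio n))
  rw [Set.ncard_prod, Set.ncard_Iio_nat, ← sq] at hcard
  exact div_le_one_of_le₀ (mod_cast hcard) (by positivity)

lemma densCount_mono {M M' : Set (ℕ × ℕ)} (h : M ⊆ M') (n : ℕ) :
    densCount M n ≤ densCount M' n := by
  unfold densCount
  gcongr
  exact finite_inter_square M' n

lemma HasDens.mono_one {M M' : Set (ℕ × ℕ)} (hM : HasDens M 1) (h : M ⊆ M') : HasDens M' 1 :=
  tendsto_of_tendsto_of_tendsto_of_le_of_le hM tendsto_const_nhds (densCount_mono h)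
    (densCount_le_one M')

lemma tendsto_sq_div_sq_sub_self :
    Tendsto (fun n : ℕ => (n : ℝ) ^ 2 / ((n : ℝ) ^ 2 - n)) atTop (𝓝 1) := by
  refine (tendsto_natCast_div_add_atTop (-1 : ℝ)).congr' ?_
  filter_upwards [eventually_ne_atTop 0] with n hn
  rw [← mul_div_mul_left (n : ℝ) _ (Nat.cast_ne_zero.2 hn)]
  ring_nf

section Asymptotics

variable {X : Type*} {d : X → X → ℝ} {f : X → X} {x : X} {ε : ℝ}

lemma corrSum_eq_densCount (ℓ n : ℕ) :
    corrSum d f x ℓ n ε = densCount (bowenPairs d f x ε ℓ) n := by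
  rw [corrSum, densCount, Set.inter_comm]
  simp only [bowenPairs, RPone, ← Set.ofPred_and, and_assoc]

lemma ncard_diagSegments_div_sq_le_corrSum {r : ℕ} (hr : 1 ≤ r) (n : ℕ) :
    ((diagSegments d f x n ε r).ncard : ℝ) / (n : ℝ) ^ 2 ≤ corrSum d f x r n ε := by
  rw [corrSum_eq_densCount, densCount]
  gcongr
  · exact finite_inter_square _ n
  · rintro p ⟨-, h₁, h₂, hones⟩
    exact ⟨hones, by lia, by lia⟩

lemma ncard_bowenPairs_inter_square_le (r n : ℕ) :
    (bowenPairs d f x ε r ∩ {p | p.1 < n ∧ p.2 < n}).ncard ≤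
      (diagSegments d f x n ε r).ncard + (2 * r + 1) * n := by
  let strip : Set ℕ := Set.Ico (n - r) n
  have hcover : bowenPairs d f x ε r ∩ {p | p.1 < n ∧ p.2 < n} ⊆
      diagSegments d f x n ε r ∪ ((fun i => (i, i)) '' Set.Iio n ∪
        (strip ×ˢ Set.Iio n ∪ Set.Iio n ×ˢ strip)) := by
    rintro ⟨i, j⟩ ⟨hones, hi, hj⟩
    simp only [diagSegments, strip, Set.mem_union, Set.mem_ofPred_eq, Set.mem_image, Set.mem_prod,
      Set.mem_Iio, Set.mem_Ico, Prod.mk.injEq] at hones hi hj ⊢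
    grind
  have hstrip : strip.ncard ≤ r := by simp only [strip, Set.ncard_Ico_nat]; lia
  have hdiag : ((fun i => (i, i)) '' Set.Iio n).ncard ≤ n :=
    (Set.ncard_image_le (Set.finite_Iio n)).trans_eq (Set.ncard_Iio_nat n)
  have hfinite : (diagSegments d f x n ε r ∪ ((fun i => (i, i)) '' Set.Iio n ∪
      (strip ×ˢ Set.Iio n ∪ Set.Iio n ×ˢ strip))).Finite :=
    (finite_diagSegments r).union (by toFinite_tac)
  calc
    _ ≤ _ := Set.ncard_le_ncard hcover hfinite
    _ ≤ (diagSegments d f x n ε r).ncard + (n + (strip.ncard * n + n * strip.ncard)) := by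
      grw [Set.ncard_union_le, Set.ncard_union_le, Set.ncard_union_le, hdiag, Set.ncard_prod,
        Set.ncard_prod, Set.ncard_Iio_nat]
    _ ≤ (diagSegments d f x n ε r).ncard + (n + (r * n + n * r)) := by gcongr
    _ = (diagSegments d f x n ε r).ncard + (2 * r + 1) * n := by ring

lemma corrSum_le_ncard_diagSegments_div_sq_add (r n : ℕ) :
    corrSum d f x r n ε ≤
      ((diagSegments d f x n ε r).ncard : ℝ) / (n : ℝ) ^ 2 + (2 * r + 1) / n := by
  rw [corrSum_eq_densCount, densCount]
  calc
    _ ≤ (((diagSegments d f x n ε r).ncard + (2 * r + 1) * n : ℕ) : ℝ) / (n : ℝ) ^ 2 := by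
      gcongr
      exact ncard_bowenPairs_inter_square_le r n
    _ = _ := by
      push_cast
      rcases eq_or_ne n 0 with rfl | hn
      · simp
      · field_simp

lemma tendsto_segmentRate {r : ℕ} {c : ℝ} (hr : 1 ≤ r)
    (h : Tendsto (fun n => corrSum d f x r n ε) atTop (𝓝 c)) :
    Tendsto (fun n => segmentRate d f x n ε r) atTop (𝓝 c) := by
  have herr : Tendsto (fun n : ℕ => (2 * r + 1 : ℝ) / n) atTop (𝓝 0) :=
    tendsto_const_div_atTop_nhds_zero_nat _
  have hsq : Tendsto (fun n => ((diagSegments d f x n ε r).ncard : ℝ) / (n : ℝ) ^ 2) atTop (𝓝 c) :=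
    tendsto_of_tendsto_of_tendsto_of_le_of_le (by simpa using h.sub herr) h
      (fun n => sub_le_iff_le_add.2 (corrSum_le_ncard_diagSegments_div_sq_add r n))
      (ncard_diagSegments_div_sq_le_corrSum hr)
  refine (by simpa using hsq.mul tendsto_sq_div_sq_sub_self : Tendsto _ atTop (𝓝 c)).congr' ?_
  filter_upwards [eventually_ne_atTop 0] with n hn
  exact div_mul_div_cancel₀ (by positivity)

variable {ℓ : ℕ} {c c' : ℝ}

lemma tendsto_rRate (hℓ : 1 ≤ ℓ) (h : Tendsto (fun n => corrSum d f x ℓ n ε) atTop (𝓝 c))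
    (h' : Tendsto (fun n => corrSum d f x (ℓ + 1) n ε) atTop (𝓝 c')) :
    Tendsto (fun n => RRate d f x n ε ℓ) atTop (𝓝 (ℓ * c - (ℓ - 1) * c')) := by
  simp only [rRate_eq hℓ]
  exact ((tendsto_segmentRate hℓ h).const_mul _).sub
    ((tendsto_segmentRate ℓ.succ_pos h').const_mul _)

lemma tendsto_lAvg_atTop (hℓ : 1 ≤ ℓ) (hc : 0 < c)
    (h : Tendsto (fun n => corrSum d f x ℓ n ε) atTop (𝓝 c))
    (h' : Tendsto (fun n => corrSum d f x (ℓ + 1) n ε) atTop (𝓝 c)) :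
    Tendsto (fun n => LAvg d f x n ε ℓ) atTop atTop := by
  have hseg := tendsto_segmentRate hℓ h
  have hRR : Tendsto (fun n => RRate d f x n ε ℓ) atTop (𝓝 c) := by
    convert tendsto_rRate hℓ h h' using 2
    ring
  have hP : Tendsto (fun n => PlineGe d f x n ε ℓ) atTop (𝓝[>] 0) := by
    simp only [plineGe_eq hℓ]
    refine tendsto_nhdsWithin_iff.2 ⟨?_, ?_⟩
    · simpa using hseg.sub (tendsto_segmentRate ℓ.succ_pos h')
    · filter_upwards [hseg.eventually_const_lt hc] with n hn
      exact sub_pos.2 (segmentRate_succ_lt hn)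
  exact hRR.pos_mul_atTop hc (tendsto_inv_nhdsGT_zero.comp hP)

lemma tendsto_rRate_dETrm_lAvg_of_tendsto_corrSum_one (hℓ : 1 ≤ ℓ)
    (h : ∀ r, Tendsto (fun n => corrSum d f x r n ε) atTop (𝓝 1)) :
    Tendsto (fun n => RRate d f x n ε ℓ) atTop (𝓝 1) ∧
    Tendsto (fun n => DETrm d f x n ε ℓ) atTop (𝓝 1) ∧
    Tendsto (fun n => LAvg d f x n ε ℓ) atTop atTop := by
  have hRR (r : ℕ) (hr : 1 ≤ r) : Tendsto (fun n => RRate d f x n ε r) atTop (𝓝 1) := by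
    simpa using tendsto_rRate hr (h r) (h (r + 1))
  refine ⟨hRR ℓ hℓ, ?_, tendsto_lAvg_atTop hℓ one_pos (h ℓ) (h (ℓ + 1))⟩
  exact div_one (1 : ℝ) ▸ (hRR ℓ hℓ).div (hRR 1 le_rfl) one_ne_zero

end Asymptotics

/-- `s ⊆ ℕ` has asymptotic density zero, the one-dimensional analogue of `HasDens M 0`. -/
def HasDensZero (s : Set ℕ) : Prop :=
  Tendsto (fun n : ℕ => ((s ∩ Set.Iio n).ncard : ℝ) / n) atTop (𝓝 0)

lemma hasDensZero_empty : HasDensZero ∅ := by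
  simp [HasDensZero]

lemma HasDensZero.union {s t : Set ℕ} (hs : HasDensZero s) (ht : HasDensZero t) :
    HasDensZero (s ∪ t) := by
  refine squeeze_zero (fun n => by positivity) (fun n => ?_) (by simpa using hs.add ht)
  rw [← add_div, Set.union_inter_distrib_right]
  gcongr
  exact mod_cast Set.ncard_union_le _ _

lemma ncard_preimage_add_inter_Iio_le (s : Set ℕ) (k n : ℕ) :
    ((· + k) ⁻¹' s ∩ Set.Iio n).ncard ≤ (s ∩ Set.Iio n).ncard + k := by
  have hsub : (· + k) '' ((· + k) ⁻¹' s ∩ Set.Iio n) ⊆ s ∩ Set.Iio n ∪ Set.Ico n (n + k) := by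
    rintro _ ⟨i, ⟨his, hin⟩, rfl⟩
    simp only [Set.mem_preimage, Set.mem_Iio] at his hin
    simp only [Set.mem_union, Set.mem_inter_iff, his, Set.mem_Iio, Set.mem_Ico]
    lia
  calc ((· + k) ⁻¹' s ∩ Set.Iio n).ncard
      = ((· + k) '' ((· + k) ⁻¹' s ∩ Set.Iio n)).ncard :=
        (Set.ncard_image_of_injective _ (add_left_injective k)).symm
    _ ≤ (s ∩ Set.Iio n ∪ Set.Ico n (n + k)).ncard := Set.ncard_le_ncard hsub
    _ ≤ (s ∩ Set.Iio n).ncard + (Set.Ico n (n + k)).ncard := Set.ncard_union_le _ _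
    _ = (s ∩ Set.Iio n).ncard + k := by rw [Set.ncard_Ico_nat, Nat.add_sub_cancel_left]

lemma HasDensZero.preimage_add {s : Set ℕ} (hs : HasDensZero s) (k : ℕ) :
    HasDensZero ((· + k) ⁻¹' s) := by
  refine squeeze_zero (fun n => by positivity) (fun n => ?_)
    (by simpa using hs.add (tendsto_const_div_atTop_nhds_zero_nat (k : ℝ)))
  rw [← add_div]
  gcongr
  exact mod_cast ncard_preimage_add_inter_Iio_le s k n

lemma HasDensZero.setOf_exists_lt_add_mem {s : Set ℕ} (hs : HasDensZero s) (N : ℕ) :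
    HasDensZero {i | ∃ k < N, i + k ∈ s} := by
  induction N with
  | zero => simpa using hasDensZero_empty
  | succ N ih =>
    simp only [Nat.exists_lt_succ_right]
    exact ih.union (hs.preimage_add N)

lemma HasDensZero.hasDens_compl_prod_compl {s : Set ℕ} (hs : HasDensZero s) :
    HasDens (sᶜ ×ˢ sᶜ) 1 := by
  have hlim : Tendsto (fun n : ℕ => (1 - ((s ∩ Set.Iio n).ncard : ℝ) / n) ^ 2) atTop (𝓝 1) := by
    simpa using (hs.const_sub 1).pow 2
  refine hlim.congr' ?_
  filter_upwards [eventually_ne_atTop 0] with n hn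
  have hset : sᶜ ×ˢ sᶜ ∩ {p : ℕ × ℕ | p.1 < n ∧ p.2 < n} =
      (Set.Iio n \ s) ×ˢ (Set.Iio n \ s) := by
    ext p
    simp only [Set.mem_inter_iff, Set.mem_prod, Set.mem_compl_iff, Set.mem_ofPred_eq,
      Set.mem_sdiff, Set.mem_Iio]
    tauto
  have hcard : ((Set.Iio n \ s).ncard : ℝ) = n - (s ∩ Set.Iio n).ncard := by
    have hsplit := Set.ncard_inter_add_ncard_sdiff_eq_ncard (Set.Iio n) s
    rw [Set.ncard_Iio_nat, Set.inter_comm] at hsplit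
    exact eq_sub_of_add_eq' (mod_cast hsplit)
  have hn' : (n : ℝ) ≠ 0 := Nat.cast_ne_zero.2 hn
  rw [densCount, hset, Set.ncard_prod, Nat.cast_mul, hcard]
  field_simp

section Sequences

variable {α : Type*}

lemma iterate_shift_apply (z : ℕ → α) (i t : ℕ) : shift^[i] z t = z (i + t) := by
  induction i generalizing t with
  | zero => rw [Nat.zero_add, Function.iterate_zero_apply]
  | succ i ih => rw [Function.iterate_succ_apply', shift, ih, Nat.succ_add_eq_add_succ]

lemma seqDist_le_of_forall_lt_eq {u v : ℕ → α} {N : ℕ} (h : ∀ i < N, u i = v i) :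
    seqDist u v ≤ (1 / 2 : ℝ) ^ N := by
  unfold seqDist
  split_ifs with huv
  · positivity
  · have hne : {i | u i ≠ v i}.Nonempty := Function.ne_iff.1 huv
    have hN : N ≤ sInf {i | u i ≠ v i} := by
      by_contra! hlt
      exact Nat.sInf_mem hne (h _ hlt)
    rw [zpow_neg, zpow_natCast, ← inv_pow, one_div]
    exact pow_le_pow_of_le_one (by norm_num) (by norm_num) hN

lemma rPone_embedSeq_of_forall_lt_eq {y : ℕ → α} {m N i j : ℕ} {ε : ℝ} (hN : (1 / 2 : ℝ) ^ N ≤ ε)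
    (h : ∀ k < N + m, y (i + k) = y (j + k)) :
    RPone seqDist shift (embedSeq m y) ε i j := by
  refine (seqDist_le_of_forall_lt_eq fun t ht => ?_).trans hN
  funext s
  simp only [iterate_shift_apply, embedSeq, add_assoc]
  exact h (t + s) (by lia)

lemma tendsto_corrSum_embedSeq_one {y : ℕ → α} {a : α} (hy : HasDensZero {i | y i ≠ a})
    (m ℓ : ℕ) {ε : ℝ} (hε : 0 < ε) :
    Tendsto (fun n => corrSum seqDist shift (embedSeq m y) ℓ n ε) atTop (𝓝 1) := by
  obtain ⟨N, hN⟩ := exists_pow_lt_of_lt_one hε (one_half_lt_one (α := ℝ))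
  have hwindow := (hy.setOf_exists_lt_add_mem (N + m + ℓ)).hasDens_compl_prod_compl
  simp only [corrSum_eq_densCount]
  refine hwindow.mono_one ?_
  rintro ⟨i, j⟩ ⟨hi, hj⟩ h hh
  simp only [Set.mem_compl_iff, Set.mem_ofPred_eq, not_exists, not_and, not_not] at hi hj
  refine rPone_embedSeq_of_forall_lt_eq hN.le fun k hk => ?_
  rw [add_assoc, add_assoc, hi _ (by lia), hj _ (by lia)]

end Sequences

section Words

variable {α β : Type*} [DecidableEq α] {φ : β → List α} {b : α} {Q P : ℕ} {v : List β} {w : List α}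

lemma mul_count_le_of_prefix_flatMap (hQ : ∀ c, (φ c).length = Q) (hP : ∀ c, (φ c).count b ≤ P)
    (hw : w <+: v.flatMap φ) : Q * w.count b ≤ (w.length + Q) * P := by
  induction v generalizing w with
  | nil => simp [List.prefix_nil.1 hw]
  | cons c v ih =>
    rw [List.flatMap_cons] at hw
    rcases List.prefix_or_prefix_of_prefix hw (List.prefix_append _ _) with hblock | ⟨w', rfl⟩
    · grw [hblock.sublist.count_le b, hP c, ← Nat.le_add_left Q w.length]
    · have htail := ih ((List.prefix_append_right_inj _).1 hw)
      calc Q * (φ c ++ w').count b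
          = Q * (φ c).count b + Q * w'.count b := by rw [List.count_append, mul_add]
        _ ≤ Q * P + (w'.length + Q) * P := by grw [hP c, htail]
        _ = ((φ c ++ w').length + Q) * P := by rw [List.length_append, hQ]; ring

lemma mul_count_le_of_infix_flatMap (hQ : ∀ c, (φ c).length = Q) (hP : ∀ c, (φ c).count b ≤ P)
    (hw : w <:+: v.flatMap φ) : Q * w.count b ≤ (w.length + 2 * Q) * P := by
  induction v generalizing w with
  | nil => simp [List.infix_nil.1 hw]
  | cons c v ih =>
    rw [List.flatMap_cons] at hw
    rcases List.infix_append_iff.1 hw with hblock | htail | ⟨w₁, w₂, rfl, hleft, hright⟩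
    · grw [hblock.sublist.count_le b, hP c]
      exact Nat.mul_le_mul_right P (by lia)
    · exact ih htail
    · calc Q * (w₁ ++ w₂).count b
          = Q * w₁.count b + Q * w₂.count b := by rw [List.count_append, mul_add]
        _ ≤ Q * P + (w₂.length + Q) * P := by
          grw [hleft.sublist.count_le b, hP c, mul_count_le_of_prefix_flatMap hQ hP hright]
        _ ≤ ((w₁ ++ w₂).length + 2 * Q) * P := by
          rw [← add_mul, List.length_append]
          exact Nat.mul_le_mul_right P (by lia)

lemma ncard_setOf_eq_inter_Iio_eq_count (y : ℕ → α) (b : α) (n : ℕ) :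
    ({i | y i = b} ∩ Set.Iio n).ncard = (List.ofFn fun t : Fin n => y t).count b := by
  have hset : {i | y i = b} ∩ Set.Iio n = ((Finset.range n).filter (y · = b) : Finset ℕ) := by
    ext i
    simp [and_comm]
  have hword : (List.ofFn fun t : Fin n => y t) = (List.range n).map y := by
    simp [List.ofFn_eq_map, ← List.map_coe_finRange_eq_range, Function.comp_def]
  rw [hset, Set.ncard_coe_finset, ← Nat.count_eq_card_filter_range, hword, List.count,
    List.countP_map]
  rfl

end Words

section Substitutions

variable {ζ : Bool → List Bool} {q : ℕ} {b : Bool} {y : ℕ → Bool}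

lemma substWord_eq_flatMap (ζ : Bool → List Bool) (w : List Bool) :
    substWord ζ w = w.flatMap ζ := by
  induction w with
  | nil => rfl
  | cons a w ih => exact congrArg (ζ a ++ ·) ih

lemma iterate_substWord_eq_flatMap (ζ : Bool → List Bool) (k : ℕ) (w : List Bool) :
    (substWord ζ)^[k] w = w.flatMap fun c => (substWord ζ)^[k] [c] := by
  induction k with
  | zero => exact (List.flatMap_singleton' w).symm
  | succ k ih =>
    simp only [Function.iterate_succ_apply', ih, substWord_eq_flatMap, List.flatMap_assoc]

lemma length_iterate_substWord (hq : ∀ a, (ζ a).length = q) (k : ℕ) (w : List Bool) :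
    ((substWord ζ)^[k] w).length = q ^ k * w.length := by
  induction k with
  | zero => rw [Function.iterate_zero_apply, pow_zero, one_mul]
  | succ k ih =>
    simp [Function.iterate_succ_apply', substWord_eq_flatMap, List.length_flatMap, hq, ih,
      pow_succ', mul_assoc, mul_comm]

lemma count_substWord (hb : b ∉ ζ !b) (w : List Bool) :
    (substWord ζ w).count b = (ζ b).count b * w.count b := by
  rw [substWord_eq_flatMap]
  induction w with
  | nil => rfl
  | cons c w ih =>
    rw [List.flatMap_cons, List.count_append, ih]
    rcases Bool.eq_or_eq_not c b with rfl | rfl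
    · rw [List.count_cons_self]
      ring
    · rw [List.count_eq_zero_of_not_mem hb, List.count_cons_of_ne (Bool.not_ne_self b), zero_add]

lemma count_iterate_substWord (hb : b ∉ ζ !b) (k : ℕ) (w : List Bool) :
    ((substWord ζ)^[k] w).count b = (ζ b).count b ^ k * w.count b := by
  induction k with
  | zero => rw [Function.iterate_zero_apply, pow_zero, one_mul]
  | succ k ih => rw [Function.iterate_succ_apply', count_substWord hb, ih, pow_succ', mul_assoc]

lemma pow_mul_ncard_setOf_eq_le (hζ : IsConstLenSubst ζ q) (hb : b ∉ ζ !b) (hy : y ∈ SubstShift ζ)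
    {k n : ℕ} (hn : q ^ k ≤ n) :
    q ^ k * ({i | y i = b} ∩ Set.Iio n).ncard ≤ 3 * n * (ζ b).count b ^ k := by
  obtain ⟨hq, hlen⟩ := hζ
  obtain ⟨c, K, -, hsubword⟩ := hy n
  have hnK : n ≤ q ^ K := by
    simpa [length_iterate_substWord hlen] using hsubword.length_le
  obtain ⟨r, rfl⟩ := Nat.exists_eq_add_of_le ((Nat.pow_le_pow_iff_right hq).1 (hn.trans hnK))
  rw [Function.iterate_add_apply, iterate_substWord_eq_flatMap] at hsubword
  have hblockLength (a : Bool) : ((substWord ζ)^[k] [a]).length = q ^ k := by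
    rw [length_iterate_substWord hlen, List.length_singleton, mul_one]
  have hblockCount (a : Bool) : ((substWord ζ)^[k] [a]).count b ≤ (ζ b).count b ^ k := by
    rw [count_iterate_substWord hb]
    exact mul_le_of_le_one_right (Nat.zero_le _) List.count_le_length
  calc q ^ k * ({i | y i = b} ∩ Set.Iio n).ncard
      = q ^ k * (List.ofFn fun t : Fin n => y t).count b := by
        rw [ncard_setOf_eq_inter_Iio_eq_count]
    _ ≤ (n + 2 * q ^ k) * (ζ b).count b ^ k := by
      simpa only [List.length_ofFn] using
        mul_count_le_of_infix_flatMap hblockLength hblockCount hsubword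
    _ ≤ 3 * n * (ζ b).count b ^ k := Nat.mul_le_mul_right _ (by lia)

lemma hasDensZero_setOf_eq_of_notMem (hζ : IsConstLenSubst ζ q) (hb : b ∉ ζ !b) (hb' : (!b) ∈ ζ b)
    (hy : y ∈ SubstShift ζ) : HasDensZero {i | y i = b} := by
  have hcount : (ζ b).count b < q :=
    hζ.2 b ▸ List.count_lt_length_iff.2 ⟨!b, hb', Bool.not_ne_self b⟩
  have hq : (0 : ℝ) < q := mod_cast hcount.pos
  have hratio : ((ζ b).count b : ℝ) / q < 1 := (div_lt_one hq).2 (mod_cast hcount)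
  have hbound (k n : ℕ) (hn : q ^ k ≤ n) :
      (({i | y i = b} ∩ Set.Iio n).ncard : ℝ) / n ≤ 3 * (((ζ b).count b : ℝ) / q) ^ k := by
    have hn0 : (0 : ℝ) < n := mod_cast (Nat.pow_pos hcount.pos).trans_le hn
    have hle : (q : ℝ) ^ k * ({i | y i = b} ∩ Set.Iio n).ncard ≤ 3 * n * ((ζ b).count b : ℝ) ^ k :=
      mod_cast pow_mul_ncard_setOf_eq_le hζ hb hy hn
    rw [div_pow, ← mul_div_assoc, div_le_div_iff₀ hn0 (pow_pos hq k)]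
    linarith
  refine tendsto_order.2
    ⟨fun δ hδ => .of_forall fun n => hδ.trans_le (by positivity), fun δ hδ => ?_⟩
  obtain ⟨k, hk⟩ := exists_pow_lt_of_lt_one (div_pos hδ three_pos) hratio
  filter_upwards [eventually_ge_atTop (q ^ k)] with n hn
  exact (hbound k n hn).trans_lt ((lt_div_iff₀' three_pos).1 hk)

lemma subsingleton_iterate_substWord (hζ : ∀ a, {c | c ∈ ζ a}.Subsingleton) (a : Bool) (k : ℕ) :
    {c | c ∈ (substWord ζ)^[k] [a]}.Subsingleton := by
  induction k with
  | zero => simp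
  | succ k ih =>
    intro c hc c' hc'
    simp only [Set.mem_ofPred_eq, Function.iterate_succ_apply', substWord_eq_flatMap,
      List.mem_flatMap] at hc hc'
    obtain ⟨e, he, hc⟩ := hc
    obtain ⟨e', he', hc'⟩ := hc'
    exact hζ e hc (ih he' he ▸ hc')

lemma eq_apply_zero_of_mem_substShift (hζ : ∀ a, {c | c ∈ ζ a}.Subsingleton)
    (hy : y ∈ SubstShift ζ) (i : ℕ) : y i = y 0 := by
  obtain ⟨a, k, -, hsubword⟩ := hy (i + 1)
  have hmem (t : Fin (i + 1)) : y t ∈ (substWord ζ)^[k] [a] :=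
    hsubword.subset (List.mem_ofFn.2 ⟨t, rfl⟩)
  exact subsingleton_iterate_substWord hζ a k (hmem (Fin.last i)) (hmem 0)

lemma isPrimitive_of_forall_mem_of_mem_not (h : ∀ c, c ∈ ζ b) (hb : b ∈ ζ !b) : IsPrimitive ζ := by
  refine ⟨2, one_le_two, fun a c => ?_⟩
  have hba : b ∈ ζ a := by
    rcases Bool.eq_or_eq_not a b with rfl | rfl
    exacts [h a, hb]
  have hsq : (substWord ζ)^[2] [a] = (ζ a).flatMap ζ := by
    simp [substWord_eq_flatMap]
  exact hsq ▸ List.mem_flatMap.2 ⟨b, hba, h c⟩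

lemma forall_subsingleton_or_exists_notMem (hnp : ¬ IsPrimitive ζ) :
    (∀ a, {c | c ∈ ζ a}.Subsingleton) ∨ ∃ b, b ∉ ζ (!b) ∧ (!b) ∈ ζ b := by
  by_contra! ⟨hne, hmem⟩
  obtain ⟨b, hb⟩ := hne
  have hall (c : Bool) : c ∈ ζ b := by
    obtain ⟨e, he, hec⟩ := hb.exists_ne !c
    exact Bool.ne_not.1 hec ▸ he
  exact hmem b (fun h => hnp (isPrimitive_of_forall_mem_of_mem_not hall h)) (hall _)

lemma exists_hasDensZero_setOf_ne (hζ : IsConstLenSubst ζ q) (hnp : ¬ IsPrimitive ζ)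
    (hy : y ∈ SubstShift ζ) : ∃ a, HasDensZero {i | y i ≠ a} := by
  rcases forall_subsingleton_or_exists_notMem hnp with hsub | ⟨b, hb, hb'⟩
  · refine ⟨y 0, ?_⟩
    simpa [eq_apply_zero_of_mem_substShift hsub hy] using hasDensZero_empty
  · refine ⟨!b, ?_⟩
    simpa using hasDensZero_setOf_eq_of_notMem hζ hb hb' hy

end Substitutions

end RQA

/-- Recurrence characteristics of non-primitive substitutions:
For a non-primitive binary substitution ζ of constant length q ≥ 2, every y ∈ X_ζ,
m, ℓ ∈ ℕ and ε > 0: C_ℓ(y^{(m)},n,ε) → 1, RR_ℓ(y^{(m)},n,ε) → 1, DET_ℓ(y^{(m)},n,ε) → 1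
and L_ℓ(y^{(m)},n,ε) → ∞ as n → ∞. -/
theorem nonprimitive_recurrence_characteristics
    (ζ : Bool → List Bool) (q : ℕ) (hζ : IsConstLenSubst ζ q)
    (hnp : ¬ IsPrimitive ζ)
    (y : ℕ → Bool) (hy : y ∈ SubstShift ζ)
    (m ℓ : ℕ) (hm : 1 ≤ m) (hℓ : 1 ≤ ℓ) (ε : ℝ) (hε : 0 < ε) :
    Tendsto (fun n : ℕ => corrSum seqDist shift (embedSeq m y) ℓ n ε) atTop (𝓝 1) ∧
    Tendsto (fun n : ℕ => RRate seqDist shift (embedSeq m y) n ε ℓ) atTop (𝓝 1) ∧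
    Tendsto (fun n : ℕ => DETrm seqDist shift (embedSeq m y) n ε ℓ) atTop (𝓝 1) ∧
    Tendsto (fun n : ℕ => LAvg seqDist shift (embedSeq m y) n ε ℓ) atTop atTop := by
  obtain ⟨a, ha⟩ := exists_hasDensZero_setOf_ne hζ hnp hy
  have hC (r : ℕ) := tendsto_corrSum_embedSeq_one ha m r hε
  exact ⟨hC ℓ, tendsto_rRate_dETrm_lAvg_of_tendsto_corrSum_one hℓ hC⟩
end

section
/- Let (X,d) be a metric space, f : X → X a map, x ∈ X, ℓ ∈ ℕ, n ≥ 2 an integer and ε > 0. Then C_ℓ(x,n,ε) = n^{-2}·[Σ_{l≥ℓ} (l − ℓ + 1)·N_l(x,n,ε) + n + Δ_ℓ] for some real number Δ_ℓ with 0 ≤ Δ_ℓ ≤ 2(ℓ−1)(n−1). -/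
open Filter Topology MeasureTheory

open RQA

/-!
Let `A_l` be the number of off-diagonal positions at which `l` consecutive ones of the recurrence
plot start. A diagonal line of length `l` is such a run that extends neither forwards nor backwards.
Runs that extend forwards, and those that extend backwards, are both counted by `A_{l+1}`, and those
that extend both ways by `A_{l+2}`, so inclusion–exclusion gives `N_l = A_l - 2 A_{l+1} + A_{l+2}`.
Summing by parts twice yields `∑_{l ≥ ℓ} (l - ℓ + 1) N_l = A_ℓ`. The remaining pairs counted by the
correlation sum are the `n` diagonal ones and those whose run of length `ℓ` leaves the plot.
-/

namespace RQA

theorem sum_range_succ_mul_second_difference {R : Type*} [CommRing R] (a : ℕ → R) (m : ℕ) :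
    ∑ k ∈ Finset.range m, ((k : R) + 1) * (a k - 2 * a (k + 1) + a (k + 2)) =
      a 0 - (m + 1) * a m + m * a (m + 1) := by
  induction m with
  | zero => simp
  | succ m ih =>
    rw [Finset.sum_range_succ, ih]
    push_cast
    ring

theorem ncard_offDiag_le_max_add_le (n m : ℕ) :
    {p : ℕ × ℕ | p.1 < n ∧ p.2 < n ∧ p.1 ≠ p.2 ∧ n ≤ max p.1 p.2 + m}.ncard ≤
      2 * (m * (n - 1)) := by
  let small := Finset.range (n - 1)
  let large := Finset.Ico (n - m) n
  have large_card_le : large.card ≤ m := by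
    rw [Nat.card_Ico]
    lia
  have subset_strips : {p : ℕ × ℕ | p.1 < n ∧ p.2 < n ∧ p.1 ≠ p.2 ∧ n ≤ max p.1 p.2 + m} ⊆
      ↑(large ×ˢ small ∪ small ×ˢ large) := by
    rintro ⟨i, j⟩ ⟨hi, hj, hij, hmax⟩
    simp only [small, large, Finset.coe_union, Finset.coe_product, Set.mem_union, Set.mem_prod,
      Finset.mem_coe, Finset.mem_Ico, Finset.mem_range]
    lia
  calc
    _ ≤ (large ×ˢ small ∪ small ×ˢ large).card := by
      rw [← Set.ncard_coe_finset]
      exact Set.ncard_le_ncard subset_strips (Finset.finite_toSet _)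
    _ ≤ large.card * (n - 1) + (n - 1) * large.card := by
      simpa only [small, Finset.card_product, Finset.card_range] using
        Finset.card_union_le (large ×ˢ small) (small ×ˢ large)
    _ = 2 * (large.card * (n - 1)) := by ring
    _ ≤ 2 * (m * (n - 1)) := by gcongr

section Runs

variable {X : Type*} (d : X → X → ℝ) (f : X → X) (x : X) (n : ℕ) (ε : ℝ) (l : ℕ)

/-- The starting points of the off-diagonal runs of `l` consecutive ones that lie inside the
recurrence plot `RP(x, n, ε)`. Unlike a diagonal line, a run need not be maximal. -/
def runs : Set (ℕ × ℕ) :=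
  {p | p.1 ≠ p.2 ∧ max p.1 p.2 + l ≤ n ∧ ∀ h < l, RPone d f x ε (p.1 + h) (p.2 + h)}

theorem finite_runs : (runs d f x n ε l).Finite :=
  (Set.finite_Iic (n, n)).subset fun _ hp => ⟨by grind [runs], by grind [runs]⟩

variable {n l} in
theorem runs_eq_empty (hl : n < l) : runs d f x n ε l = ∅ :=
  Set.eq_empty_of_forall_notMem fun _ hp => by grind [runs]

variable {d f x n ε l}

theorem mem_runs_succ {p : ℕ × ℕ} :
    p ∈ runs d f x n ε (l + 1) ↔
      p ∈ runs d f x n ε l ∧ max p.1 p.2 + l < n ∧ RPone d f x ε (p.1 + l) (p.2 + l) := by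
  simp only [runs, Set.mem_ofPred_eq, Nat.forall_lt_succ_right]
  grind

theorem mem_image_add_one_runs_succ {p : ℕ × ℕ} :
    p ∈ (· + 1) '' runs d f x n ε (l + 1) ↔
      p ∈ runs d f x n ε l ∧ 0 < p.1 ∧ 0 < p.2 ∧ RPone d f x ε (p.1 - 1) (p.2 - 1) := by
  obtain ⟨i, j⟩ := p
  constructor
  · rintro ⟨⟨a, b⟩, ⟨hne, hmax, hones⟩, ⟨⟩⟩
    dsimp only at hmax
    have hmax_succ : max (a + 1) (b + 1) + l ≤ n := by lia
    refine ⟨⟨by simpa using hne, hmax_succ, fun h hh => ?_⟩, by simp, by simp,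
      by simpa using hones 0⟩
    simpa [add_assoc, add_comm 1 h] using hones (h + 1) (by lia)
  · rintro ⟨⟨hne, hmax, hones⟩, hi, hj, hprev⟩
    obtain ⟨i, rfl⟩ := Nat.exists_eq_add_one.mpr hi
    obtain ⟨j, rfl⟩ := Nat.exists_eq_add_one.mpr hj
    refine ⟨(i, j), ⟨by grind, by grind, ?_⟩, rfl⟩
    rintro (_ | h) hh
    · simpa using hprev
    · simpa [add_assoc, add_comm 1 h] using hones h (by lia)

theorem runs_succ_inter_image_add_one :
    runs d f x n ε (l + 1) ∩ (· + 1) '' runs d f x n ε (l + 1) =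
      (· + 1) '' runs d f x n ε (l + 2) := by
  ext p
  rw [Set.mem_inter_iff, mem_image_add_one_runs_succ, mem_image_add_one_runs_succ, mem_runs_succ]
  tauto

theorem setOf_isLine_eq_runs_sdiff (hl : 1 ≤ l) :
    {p : ℕ × ℕ | IsLine d f x n ε p.1 p.2 l} =
      runs d f x n ε l \ (runs d f x n ε (l + 1) ∪ (· + 1) '' runs d f x n ε (l + 1)) := by
  ext p
  rw [Set.mem_sdiff, Set.mem_union, mem_image_add_one_runs_succ, mem_runs_succ]
  simp only [IsLine, runs, Set.mem_ofPred_eq]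
  grind

variable (d f x n ε)

theorem Nlines_eq_second_difference_ncard_runs (hl : 1 ≤ l) :
    (Nlines d f x n ε l : ℝ) = (runs d f x n ε l).ncard - 2 * (runs d f x n ε (l + 1)).ncard +
      (runs d f x n ε (l + 2)).ncard := by
  set A := runs d f x n ε
  have ncard_image (s : Set (ℕ × ℕ)) : ((· + 1) '' s).ncard = s.ncard :=
    Set.ncard_image_of_injective s (add_left_injective 1)
  have extensions_subset : A (l + 1) ∪ (· + 1) '' A (l + 1) ⊆ A l :=
    Set.union_subset (fun _ hp => (mem_runs_succ.mp hp).1)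
      fun _ hp => (mem_image_add_one_runs_succ.mp hp).1
  have lines_add_extensions :
      Nlines d f x n ε l + (A (l + 1) ∪ (· + 1) '' A (l + 1)).ncard = (A l).ncard := by
    rw [Nlines, setOf_isLine_eq_runs_sdiff hl]
    exact Set.ncard_sdiff_add_ncard_of_subset extensions_subset (finite_runs ..)
  have inclusion_exclusion :
      (A (l + 1) ∪ (· + 1) '' A (l + 1)).ncard + (A (l + 2)).ncard = 2 * (A (l + 1)).ncard := by
    rw [← ncard_image (A (l + 2)), ← runs_succ_inter_image_add_one,
      Set.ncard_union_add_ncard_inter _ _ (finite_runs ..) ((finite_runs ..).image _),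
      ncard_image, two_mul]
  rify at lines_add_extensions inclusion_exclusion
  linarith

theorem tsum_succ_mul_Nlines (hl : 1 ≤ l) :
    ∑' k : ℕ, ((k : ℝ) + 1) * (Nlines d f x n ε (l + k) : ℝ) = (runs d f x n ε l).ncard := by
  let a (k : ℕ) : ℝ := (runs d f x n ε (l + k)).ncard
  have a_eq_zero {k : ℕ} (hk : n ≤ k) : a k = 0 := by
    simp [a, runs_eq_empty d f x ε (show n < l + k by lia)]
  have Nlines_eq (k : ℕ) : (Nlines d f x n ε (l + k) : ℝ) = a k - 2 * a (k + 1) + a (k + 2) :=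
    Nlines_eq_second_difference_ncard_runs d f x n ε (by lia)
  simp only [Nlines_eq]
  rw [tsum_eq_sum (s := Finset.range n), sum_range_succ_mul_second_difference,
    a_eq_zero le_rfl, a_eq_zero (Nat.le_succ n)]
  · simp [a]
  · intro k hk
    have hnk : n ≤ k := by simpa using hk
    simp [a_eq_zero hnk, a_eq_zero (show n ≤ k + 1 by lia), a_eq_zero (show n ≤ k + 2 by lia)]

end Runs

section ClosePairs

variable {X : Type*} (d : X → X → ℝ) (f : X → X) (x : X) (ℓ n : ℕ) (ε : ℝ)

/-- The pairs `(i, j)` counted by the correlation sum `C_ℓ(x, n, ε)`: those `i, j < n` for which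
`f^i(x)` and `f^j(x)` are within `ε` in the Bowen metric `d_ℓ`. The run of `ℓ` ones starting at
`(i, j)` may leave the `n × n` plot. -/
def closePairs : Set (ℕ × ℕ) :=
  {p | p.1 < n ∧ p.2 < n ∧ ∀ k < ℓ, RPone d f x ε (p.1 + k) (p.2 + k)}

theorem corrSum_eq_ncard_closePairs_div :
    corrSum d f x ℓ n ε = (closePairs d f x ℓ n ε).ncard / (n : ℝ) ^ 2 :=
  rfl

theorem finite_closePairs : (closePairs d f x ℓ n ε).Finite :=
  (Set.finite_Iic (n, n)).subset fun _ hp => ⟨hp.1.le, hp.2.1.le⟩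

variable {d f x ε} in
theorem ncard_closePairs_inter_diagonal (hdiag : ∀ i, RPone d f x ε i i) :
    (closePairs d f x ℓ n ε ∩ Set.diagonal ℕ).ncard = n := by
  have eq_image : closePairs d f x ℓ n ε ∩ Set.diagonal ℕ =
      (fun i => (i, i)) '' (Finset.range n : Set ℕ) := by
    ext ⟨i, j⟩
    constructor
    · rintro ⟨⟨hi, -, -⟩, rfl : i = j⟩
      exact ⟨i, Finset.mem_range.mpr hi, rfl⟩
    · rintro ⟨i, hi, ⟨⟩⟩
      have hi : i < n := Finset.mem_range.mp hi
      exact ⟨⟨hi, hi, fun k _ => hdiag (i + k)⟩, rfl⟩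
  rw [eq_image, Set.ncard_image_of_injective _ fun _ _ h => congrArg Prod.fst h,
    Set.ncard_coe_finset, Finset.card_range]

variable {ℓ} in
theorem runs_subset_closePairs_sdiff_diagonal (hℓ : 1 ≤ ℓ) :
    runs d f x n ε ℓ ⊆ closePairs d f x ℓ n ε \ Set.diagonal ℕ :=
  fun _ ⟨hne, hmax, hones⟩ => ⟨⟨by lia, by lia, hones⟩, hne⟩

theorem ncard_closePairs_sdiff_diagonal_sdiff_runs_le :
    ((closePairs d f x ℓ n ε \ Set.diagonal ℕ) \ runs d f x n ε ℓ).ncard ≤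
      2 * ((ℓ - 1) * (n - 1)) := by
  refine (Set.ncard_le_ncard ?_ ?_).trans (ncard_offDiag_le_max_add_le n (ℓ - 1))
  · rintro p ⟨⟨⟨hi, hj, hones⟩, hne⟩, hruns⟩
    have leaves_plot : ¬ max p.1 p.2 + ℓ ≤ n := fun hmax => hruns ⟨hne, hmax, hones⟩
    exact ⟨hi, hj, hne, by lia⟩
  · exact (Set.finite_Iic (n, n)).subset fun _ hp => ⟨hp.1.le, hp.2.1.le⟩

variable {d f x ℓ ε} in
theorem ncard_closePairs (hℓ : 1 ≤ ℓ) (hdiag : ∀ i, RPone d f x ε i i) :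
    (closePairs d f x ℓ n ε).ncard = (runs d f x n ε ℓ).ncard + n +
      ((closePairs d f x ℓ n ε \ Set.diagonal ℕ) \ runs d f x n ε ℓ).ncard := by
  have split_diagonal := Set.ncard_inter_add_ncard_sdiff_eq_ncard
    (closePairs d f x ℓ n ε) (Set.diagonal ℕ) (finite_closePairs ..)
  have split_runs := Set.ncard_sdiff_add_ncard_of_subset
    (runs_subset_closePairs_sdiff_diagonal d f x n ε hℓ) (finite_closePairs ..).sdiff
  rw [ncard_closePairs_inter_diagonal ℓ n hdiag] at split_diagonal
  lia

end ClosePairs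

end RQA

theorem corrSum_eq_sum_Nlines_general
    {X : Type*} (d : X → X → ℝ) (f : X → X) (x : X)
    (ℓ n : ℕ) (hℓ : 1 ≤ ℓ) (hn : 1 ≤ n) (ε : ℝ) (hdiag : ∀ i, RPone d f x ε i i) :
    ∃ Δ : ℝ, 0 ≤ Δ ∧ Δ ≤ 2 * ((ℓ : ℝ) - 1) * ((n : ℝ) - 1) ∧
      corrSum d f x ℓ n ε =
        ((n : ℝ) ^ 2)⁻¹ *
          ((∑' k : ℕ, ((k : ℝ) + 1) * (Nlines d f x n ε (ℓ + k) : ℝ)) + (n : ℝ) + Δ) := by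
  refine ⟨((closePairs d f x ℓ n ε \ Set.diagonal ℕ) \ runs d f x n ε ℓ).ncard,
    Nat.cast_nonneg _, ?_, ?_⟩
  · have remainder_le := ncard_closePairs_sdiff_diagonal_sdiff_runs_le d f x ℓ n ε
    rify [hℓ, hn] at remainder_le
    linarith
  · rw [corrSum_eq_ncard_closePairs_div, ncard_closePairs n hℓ hdiag,
      tsum_succ_mul_Nlines d f x n ε hℓ, div_eq_inv_mul]
    push_cast
    rfl

/-- C_ℓ(x,n,ε) = n^{-2}·[Σ_{l≥ℓ}(l−ℓ+1)·N_l(x,n,ε) + n + Δ_ℓ]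
with 0 ≤ Δ_ℓ ≤ 2(ℓ−1)(n−1). -/
theorem corrSum_eq_sum_Nlines
    {X : Type*} [MetricSpace X] (f : X → X) (x : X)
    (ℓ n : ℕ) (hℓ : 1 ≤ ℓ) (hn : 2 ≤ n) (ε : ℝ) (hε : 0 < ε) :
    ∃ Δ : ℝ, 0 ≤ Δ ∧ Δ ≤ 2 * ((ℓ : ℝ) - 1) * ((n : ℝ) - 1) ∧
      corrSum dist f x ℓ n ε =
        ((n : ℝ) ^ 2)⁻¹ *
          ((∑' k : ℕ, ((k : ℝ) + 1) * (Nlines dist f x n ε (ℓ + k) : ℝ)) + (n : ℝ) + Δ) := by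
  exact corrSum_eq_sum_Nlines_general dist f x ℓ n hℓ (by lia) ε fun _ => by
    simpa only [RPone, dist_self] using hε.le
end

section
/- Let (X,d) be a metric space, f : X → X a map, x ∈ X, ℓ ∈ ℕ, n ≥ 2 an integer and ε > 0. Then RR_ℓ(x,n,ε) = (n/(n−1))·[ℓ·C_ℓ(x,n,ε) − (ℓ−1)·C_{ℓ+1}(x,n,ε)] − 1/(n−1) + δ for some real number δ with |δ| ≤ 2ℓ(ℓ−1)/n. -/
open Filter Topology MeasureTheory

open RQA

/-!
Let `S l` count the off-diagonal segments of `l` consecutive ones that fit into the `n × n` plot.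
A segment of length `l` either cannot be prolonged backwards, or arises by dropping the first cell
of a segment of length `l + 1`; so `S l - S (l + 1)` segments of length `l` are maximal on the left.
Lines are the left-maximal segments that cannot be prolonged forwards either, whence
`N l = S l - 2 * S (l + 1) + S (l + 2)`, and Abel summation gives
`∑_{l ≥ ℓ} l * N l = ℓ * S ℓ - (ℓ - 1) * S (ℓ + 1)`.
The correlation sum counts, besides these segments, the `n` diagonal cells and those segments that
leave the plot; the latter start within `l - 1` cells of its border.
-/

namespace RQA

open Finset

section Segments

variable {R : ℕ → ℕ → Prop} {m n l i j : ℕ} {p : ℕ × ℕ}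

open Classical in
/-- The off-diagonal cells of the `m × m` square from which `R` holds along `l` consecutive steps in
the diagonal direction. The steps may leave the square, as in the correlation sum. -/
noncomputable def recurrentPairs (R : ℕ → ℕ → Prop) (m l : ℕ) : Finset (ℕ × ℕ) :=
  {p ∈ (range m).offDiag | ∀ h < l, R (p.1 + h) (p.2 + h)}

/-- The starting cells of the off-diagonal segments of length `l` lying inside the `n × n` plot of
`R`. Such a segment starts in the square of side `n + 1 - l`, which is empty if `n < l`. -/
noncomputable def segmentStarts (R : ℕ → ℕ → Prop) (n l : ℕ) : Finset (ℕ × ℕ) :=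
  recurrentPairs R (n + 1 - l) l

open Classical in
/-- The starting cells of those segments of length `l` in the `n × n` plot of `R` that cannot be
prolonged backwards. -/
noncomputable def leftMaximalStarts (R : ℕ → ℕ → Prop) (n l : ℕ) : Finset (ℕ × ℕ) :=
  {p ∈ segmentStarts R n l | 0 < p.1 → 0 < p.2 → ¬ R (p.1 - 1) (p.2 - 1)}

/-- For `1 ≤ l`, the number of cells counted by `recurrentPairs R n l` whose segment of length `l`
leaves the `n × n` plot. For `l = 0` it is `-2 * n`, since then segments start in the square of side
`n + 1`. -/
noncomputable def borderExcess (R : ℕ → ℕ → Prop) (n l : ℕ) : ℝ :=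
  #(recurrentPairs R n l) - #(segmentStarts R n l)

lemma mem_recurrentPairs :
    p ∈ recurrentPairs R m l ↔
      p.1 < m ∧ p.2 < m ∧ p.1 ≠ p.2 ∧ ∀ h < l, R (p.1 + h) (p.2 + h) := by
  simp only [recurrentPairs, mem_filter, mem_offDiag, mem_range, and_assoc]

lemma mem_segmentStarts :
    p ∈ segmentStarts R n l ↔
      p.1 + l ≤ n ∧ p.2 + l ≤ n ∧ p.1 ≠ p.2 ∧ ∀ h < l, R (p.1 + h) (p.2 + h) := by
  have lt_iff (a : ℕ) : a < n + 1 - l ↔ a + l ≤ n := by omega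
  simp only [segmentStarts, mem_recurrentPairs, lt_iff]

lemma mem_leftMaximalStarts :
    p ∈ leftMaximalStarts R n l ↔
      p ∈ segmentStarts R n l ∧ (0 < p.1 → 0 < p.2 → ¬ R (p.1 - 1) (p.2 - 1)) := by
  simp only [leftMaximalStarts, mem_filter]

lemma mem_segmentStarts_succ_iff_snoc :
    (i, j) ∈ segmentStarts R n (l + 1) ↔
      (i, j) ∈ segmentStarts R n l ∧ max i j + l < n ∧ R (i + l) (j + l) := by
  simp only [mem_segmentStarts, Nat.forall_lt_succ_right]
  grind

lemma mem_segmentStarts_succ_iff_cons :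
    (i, j) ∈ segmentStarts R n (l + 1) ↔ R i j ∧ (i + 1, j + 1) ∈ segmentStarts R n l := by
  simp only [mem_segmentStarts, Nat.forall_lt_succ_left, add_zero, add_assoc, add_comm 1,
    ne_eq, Nat.add_right_cancel_iff]
  tauto

lemma segmentStarts_eq_empty (h : n < l) : segmentStarts R n l = ∅ := by
  simp [segmentStarts, recurrentPairs, Nat.sub_eq_zero_of_le h]

lemma leftMaximalStarts_succ_subset : leftMaximalStarts R n (l + 1) ⊆ leftMaximalStarts R n l := by
  intro p hp
  rw [mem_leftMaximalStarts, mem_segmentStarts_succ_iff_snoc] at hp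
  exact mem_leftMaximalStarts.2 ⟨hp.1.1, hp.2⟩

lemma segmentStarts_sdiff_leftMaximalStarts :
    segmentStarts R n l \ leftMaximalStarts R n l =
      (segmentStarts R n (l + 1)).image (Prod.map Nat.succ Nat.succ) := by
  ext ⟨i, j⟩
  simp only [Finset.mem_sdiff, mem_leftMaximalStarts, mem_image, Prod.exists,
    mem_segmentStarts_succ_iff_cons, Prod.map_apply, Prod.mk.injEq]
  constructor
  · rintro ⟨hseg, hext⟩
    obtain ⟨hi, hj, hR⟩ : 0 < i ∧ 0 < j ∧ R (i - 1) (j - 1) := by grind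
    refine ⟨i - 1, j - 1, ⟨hR, ?_⟩, by omega, by omega⟩
    rwa [Nat.sub_add_cancel hi, Nat.sub_add_cancel hj]
  · rintro ⟨a, b, ⟨hR, hseg⟩, rfl, rfl⟩
    exact ⟨hseg, fun hmax => hmax.2 a.succ_pos b.succ_pos hR⟩

variable (R n l)

lemma card_leftMaximalStarts_add :
    #(leftMaximalStarts R n l) + #(segmentStarts R n (l + 1)) = #(segmentStarts R n l) := by
  have hsub : leftMaximalStarts R n l ⊆ segmentStarts R n l :=
    fun _ hp => (mem_leftMaximalStarts.1 hp).1
  rw [← card_sdiff_add_card_eq_card hsub, segmentStarts_sdiff_leftMaximalStarts,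
    card_image_of_injective _ (Nat.succ_injective.prodMap Nat.succ_injective), add_comm]

lemma card_leftMaximalStarts_sdiff_add :
    #(leftMaximalStarts R n l \ leftMaximalStarts R n (l + 1)) + 2 * #(segmentStarts R n (l + 1)) =
      #(segmentStarts R n l) + #(segmentStarts R n (l + 2)) := by
  have hdiff :=
    card_sdiff_add_card_eq_card (leftMaximalStarts_succ_subset : _ ⊆ leftMaximalStarts R n l)
  have hl := card_leftMaximalStarts_add R n l
  have hl' : _ + #(segmentStarts R n (l + 2)) = _ := card_leftMaximalStarts_add R n (l + 1)
  omega

variable {n l}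

lemma recurrentPairs_mono (hmn : m ≤ n) : recurrentPairs R m l ⊆ recurrentPairs R n l := by
  intro p
  simp only [mem_recurrentPairs]
  exact fun ⟨hi, hj, hrec⟩ => ⟨hi.trans_le hmn, hj.trans_le hmn, hrec⟩

lemma card_recurrentPairs_add_le (hmn : m ≤ n) :
    #(recurrentPairs R n l) + #(range m).offDiag ≤
      #(recurrentPairs R m l) + #(range n).offDiag := by
  have hsub : recurrentPairs R n l \ recurrentPairs R m l ⊆
      (range n).offDiag \ (range m).offDiag := by
    intro p
    simp only [Finset.mem_sdiff, mem_recurrentPairs, mem_offDiag, mem_range]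
    tauto
  have hcard := card_le_card hsub
  have hoff := card_sdiff_add_card_eq_card (offDiag_mono (range_mono hmn))
  have hrec := card_sdiff_add_card_eq_card (recurrentPairs_mono R (l := l) hmn)
  omega

lemma card_offDiag_range_le (n k : ℕ) :
    #(range n).offDiag ≤ #(range (n - k)).offDiag + 2 * (k * (n - 1)) := by
  simp only [offDiag_card, card_range, ← Nat.mul_sub_one]
  rcases le_or_gt n k with hnk | hkn
  · calc n * (n - 1) ≤ 2 * (k * (n - 1)) := by rw [← mul_assoc]; gcongr; omega
      _ ≤ _ := Nat.le_add_left _ _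
  · obtain ⟨q, rfl⟩ : ∃ q, n = q + 1 + k := ⟨n - k - 1, by omega⟩
    have hk : k ≤ k * k := Nat.le_mul_self k
    have hq : q + 1 + k - 1 = q + k := by omega
    simp only [Nat.add_sub_cancel, hq]
    linarith

lemma borderExcess_mem_Icc (hl : 1 ≤ l) (hn : 1 ≤ n) :
    borderExcess R n l ∈ Set.Icc 0 (2 * ((l : ℝ) - 1) * ((n : ℝ) - 1)) := by
  have hside : n + 1 - l = n - (l - 1) := by omega
  have hlower : #(segmentStarts R n l) ≤ #(recurrentPairs R n l) :=
    card_le_card (recurrentPairs_mono R (by omega))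
  have hupper : #(recurrentPairs R n l) ≤ #(segmentStarts R n l) + 2 * ((l - 1) * (n - 1)) := by
    have hrec := card_recurrentPairs_add_le R (l := l) (Nat.sub_le n (l - 1))
    have hoff := card_offDiag_range_le n (l - 1)
    rw [segmentStarts, hside]
    omega
  rify [hl, hn] at hlower hupper
  constructor <;> simp only [borderExcess] <;> linarith

lemma abs_mul_borderExcess_sub_mul_le (hl : 1 ≤ l) (hn : 1 ≤ n) :
    |(l - 1) * borderExcess R n (l + 1) - l * borderExcess R n l| ≤
      2 * l * ((l : ℝ) - 1) * ((n : ℝ) - 1) := by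
  obtain ⟨hnonneg, hle⟩ := borderExcess_mem_Icc R hl hn
  obtain ⟨hnonneg', hle'⟩ := borderExcess_mem_Icc R (Nat.le_add_left 1 l) hn
  rw [Nat.cast_succ, add_sub_cancel_right] at hle'
  have hl' : (0 : ℝ) ≤ l - 1 := sub_nonneg.2 (by exact_mod_cast hl)
  apply abs_sub_le_of_nonneg_of_le
  · positivity
  · calc (l - 1) * borderExcess R n (l + 1) ≤ (l - 1) * (2 * l * ((n : ℝ) - 1)) := by gcongr
      _ = _ := by ring
  · positivity
  · calc l * borderExcess R n l ≤ l * (2 * ((l : ℝ) - 1) * ((n : ℝ) - 1)) := by gcongr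
      _ = _ := by ring

lemma ncard_setOf_recurrent (n l : ℕ) (hdiag : ∀ i, R i i) :
    {p : ℕ × ℕ | p.1 < n ∧ p.2 < n ∧ ∀ h, h < l → R (p.1 + h) (p.2 + h)}.ncard =
      #(recurrentPairs R n l) + n := by
  have hset : {p : ℕ × ℕ | p.1 < n ∧ p.2 < n ∧ ∀ h, h < l → R (p.1 + h) (p.2 + h)} =
      ↑(recurrentPairs R n l ∪ (range n).diag) := by
    ext ⟨i, j⟩
    simp only [Set.mem_ofPred_eq, coe_union, Set.mem_union, mem_coe, mem_recurrentPairs, mem_diag,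
      mem_range]
    rcases eq_or_ne i j with rfl | hij
    · simp [hdiag]
    · simp [hij]
  have hdisj : Disjoint (recurrentPairs R n l) (range n).diag := by
    classical exact (disjoint_diag_offDiag _).symm.mono_left (filter_subset _ _)
  rw [hset, Set.ncard_coe_finset, card_union_of_disjoint hdisj, diag_card, card_range]

end Segments

section Lines

variable {X : Type*} (d : X → X → ℝ) (f : X → X) (x : X) (n : ℕ) (ε : ℝ) {l : ℕ}

lemma setOf_isLine (hl : 1 ≤ l) :
    {p : ℕ × ℕ | IsLine d f x n ε p.1 p.2 l} =
      ↑(leftMaximalStarts (RPone d f x ε) n l \ leftMaximalStarts (RPone d f x ε) n (l + 1)) := by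
  ext ⟨i, j⟩
  simp only [Set.mem_ofPred_eq, IsLine, coe_sdiff, Set.mem_sdiff, mem_coe, mem_leftMaximalStarts,
    mem_segmentStarts_succ_iff_snoc]
  simp only [mem_segmentStarts]
  tauto

lemma Nlines_eq_segmentStarts (hl : 1 ≤ l) :
    (Nlines d f x n ε l : ℝ) = #(segmentStarts (RPone d f x ε) n l)
      - 2 * #(segmentStarts (RPone d f x ε) n (l + 1))
      + #(segmentStarts (RPone d f x ε) n (l + 2)) := by
  have hcard := card_leftMaximalStarts_sdiff_add (RPone d f x ε) n l
  rw [← Set.ncard_coe_finset, ← setOf_isLine d f x n ε hl, ← Nlines] at hcard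
  have hcast := congrArg (Nat.cast (R := ℝ)) hcard
  push_cast at hcast
  linarith

end Lines

section AbelSummation

lemma sum_range_mul_secondDifference {A : Type*} [CommRing A] (a : ℕ → A) (ℓ K : ℕ) :
    ∑ k ∈ range K, ((ℓ + k : ℕ) : A) * (a (ℓ + k) - 2 * a (ℓ + k + 1) + a (ℓ + k + 2)) =
      ℓ * a ℓ - (ℓ - 1) * a (ℓ + 1)
        - ((ℓ + K) * a (ℓ + K) - (ℓ + K - 1) * a (ℓ + K + 1)) := by
  induction K with
  | zero => simp
  | succ K ih =>
    rw [sum_range_succ, ih]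
    simp only [← add_assoc]
    push_cast
    ring

lemma tsum_mul_secondDifference {a : ℕ → ℝ} {n : ℕ} (ha : ∀ l, n < l → a l = 0) (ℓ : ℕ) :
    ∑' k : ℕ, ((ℓ + k : ℕ) : ℝ) * (a (ℓ + k) - 2 * a (ℓ + k + 1) + a (ℓ + k + 2)) =
      ℓ * a ℓ - (ℓ - 1) * a (ℓ + 1) := by
  rw [tsum_eq_sum (s := range (n + 1)), sum_range_mul_secondDifference,
    ha (ℓ + (n + 1)) (by omega), ha (ℓ + (n + 1) + 1) (by omega)]
  · ring
  · intro k hk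
    have hnk : n < k := by simpa using hk
    rw [ha (ℓ + k) (by omega), ha (ℓ + k + 1) (by omega), ha (ℓ + k + 2) (by omega)]
    ring

end AbelSummation

section RecurrenceQuantities

variable {X : Type*} {d : X → X → ℝ} {f : X → X} {x : X} {ε : ℝ} {ℓ : ℕ}

lemma RRate_eq_segmentStarts (n : ℕ) (hℓ : 1 ≤ ℓ) :
    RRate d f x n ε ℓ =
      (ℓ * #(segmentStarts (RPone d f x ε) n ℓ)
        - (ℓ - 1) * #(segmentStarts (RPone d f x ε) n (ℓ + 1))) / ((n : ℝ) ^ 2 - n) := by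
  have hzero (l : ℕ) (hl : n < l) : (#(segmentStarts (RPone d f x ε) n l) : ℝ) = 0 := by
    simp [segmentStarts_eq_empty hl]
  rw [RRate, ← tsum_mul_secondDifference hzero, ← tsum_div_const]
  refine tsum_congr fun k => ?_
  rw [Pline, Nlines_eq_segmentStarts d f x n ε (by omega), mul_div_assoc]

lemma corrSum_eq_recurrentPairs (ℓ n : ℕ) (hdiag : ∀ i, RPone d f x ε i i) :
    corrSum d f x ℓ n ε = (#(recurrentPairs (RPone d f x ε) n ℓ) + n) / (n : ℝ) ^ 2 := by
  rw [← Nat.cast_add, ← ncard_setOf_recurrent _ n ℓ hdiag]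
  rfl

lemma RRate_eq_corrSum_add_borderExcess {n : ℕ} (hdiag : ∀ i, RPone d f x ε i i) (hℓ : 1 ≤ ℓ)
    (hn : 2 ≤ n) :
    RRate d f x n ε ℓ =
      (n / (n - 1)) * (ℓ * corrSum d f x ℓ n ε - (ℓ - 1) * corrSum d f x (ℓ + 1) n ε)
        - 1 / (n - 1)
        + ((ℓ - 1) * borderExcess (RPone d f x ε) n (ℓ + 1)
          - ℓ * borderExcess (RPone d f x ε) n ℓ) / (n * (n - 1)) := by
  have hn₀ : (n : ℝ) ≠ 0 := by positivity
  have hn₁ : (n : ℝ) - 1 ≠ 0 := sub_ne_zero.2 (by exact_mod_cast (by omega : n ≠ 1))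
  rw [RRate_eq_segmentStarts n hℓ, corrSum_eq_recurrentPairs _ _ hdiag,
    corrSum_eq_recurrentPairs _ _ hdiag, borderExcess, borderExcess,
    show (n : ℝ) ^ 2 - n = n * (n - 1) by ring]
  field_simp
  ring

end RecurrenceQuantities

end RQA

theorem RRate_eq_corrSum_general
    {X : Type*} {d : X → X → ℝ} {f : X → X} {x : X} {ε : ℝ} (hdiag : ∀ i, RPone d f x ε i i)
    {ℓ n : ℕ} (hℓ : 1 ≤ ℓ) (hn : 2 ≤ n) :
    ∃ δ : ℝ, |δ| ≤ 2 * (ℓ : ℝ) * ((ℓ : ℝ) - 1) / (n : ℝ) ∧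
      RRate d f x n ε ℓ =
        ((n : ℝ) / ((n : ℝ) - 1)) *
          ((ℓ : ℝ) * corrSum d f x ℓ n ε - ((ℓ : ℝ) - 1) * corrSum d f x (ℓ + 1) n ε)
        - 1 / ((n : ℝ) - 1) + δ := by
  refine ⟨_, ?_, RRate_eq_corrSum_add_borderExcess hdiag hℓ hn⟩
  have hn₁ : (0 : ℝ) < n - 1 := sub_pos.2 (by exact_mod_cast hn)
  rw [abs_div, abs_of_pos (by positivity : (0 : ℝ) < n * (n - 1)),
    ← mul_div_mul_right (2 * (ℓ : ℝ) * (ℓ - 1)) _ hn₁.ne']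
  gcongr
  exact abs_mul_borderExcess_sub_mul_le _ hℓ (one_le_two.trans hn)

/-- Recurrence rate via correlation sums:
RR_ℓ(x,n,ε) = (n/(n−1))·[ℓ·C_ℓ − (ℓ−1)·C_{ℓ+1}] − 1/(n−1) + δ with |δ| ≤ 2ℓ(ℓ−1)/n. -/
theorem RRate_eq_corrSum
    {X : Type*} [MetricSpace X] (f : X → X) (x : X)
    (ℓ n : ℕ) (hℓ : 1 ≤ ℓ) (hn : 2 ≤ n) (ε : ℝ) (hε : 0 < ε) :
    ∃ δ : ℝ, |δ| ≤ 2 * (ℓ : ℝ) * ((ℓ : ℝ) - 1) / (n : ℝ) ∧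
      RRate dist f x n ε ℓ =
        ((n : ℝ) / ((n : ℝ) - 1)) *
          ((ℓ : ℝ) * corrSum dist f x ℓ n ε - ((ℓ : ℝ) - 1) * corrSum dist f x (ℓ + 1) n ε)
        - 1 / ((n : ℝ) - 1) + δ := by
  exact RRate_eq_corrSum_general (fun i => by simp [RPone, hε.le]) hℓ hn
end

section
/- Let (X,d) be a metric space, f : X → X a map, x ∈ X, ℓ ∈ ℕ, n ≥ 2 an integer and ε > 0. Then P≥_ℓ(x,n,ε) = (n/(n−1))·[C_ℓ(x,n,ε) − C_{ℓ+1}(x,n,ε)] + δ for some real number δ with |δ| ≤ 2ℓ/n. -/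
open Filter Topology MeasureTheory

open RQA

/-!
Match each diagonal line of length `l ≥ ℓ` with the starting point of its last `ℓ` entries. Since
a run of ones extends backwards to a unique line, this identifies the lines of length at least `ℓ`
with the off-diagonal points from which the ones continue for exactly `ℓ` entries, where a run
that reaches the border of the plot is regarded as ending there. The difference `C_ℓ - C_{ℓ+1}`
counts the same points, except that the orbit is continued past the border. The two counts
therefore differ only at off-diagonal points `(i, j)` with `max i j ≥ n - ℓ`, of which there are
at most `2 ℓ (n - 1)`.
-/

namespace RQA

open Finset

section Runs

variable (R : ℕ → ℕ → Prop)

/-- The `l` consecutive diagonal entries of `R` starting at `(i, j)` all hold: a diagonal segment of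
ones in a recurrence plot, not required to be maximal. -/
def IsRun (i j l : ℕ) : Prop := ∀ h, h < l → R (i + h) (j + h)

variable {R}

lemma isRun_succ {i j l : ℕ} : IsRun R i j (l + 1) ↔ IsRun R i j l ∧ R (i + l) (j + l) :=
  Nat.forall_lt_succ_right

lemma isRun_add {i j m l : ℕ} :
    IsRun R i j (m + l) ↔ IsRun R i j m ∧ IsRun R (i + m) (j + m) l := by
  induction l with
  | zero => simp [IsRun]
  | succ l ih => rw [← add_assoc, isRun_succ, isRun_succ, ih, and_assoc, add_assoc, add_assoc]

lemma isRun_one {i j : ℕ} : IsRun R i j 1 ↔ R i j := by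
  simp [IsRun]

lemma IsRun.exists_backward_maximal {a b l : ℕ} (hrun : IsRun R a b l) :
    ∃ i j k, i + k = a ∧ j + k = b ∧ IsRun R i j (l + k) ∧
      (0 < i → 0 < j → ¬ R (i - 1) (j - 1)) := by
  induction a generalizing b l with
  | zero => exact ⟨0, b, 0, rfl, rfl, hrun, fun h ↦ absurd h (lt_irrefl 0)⟩
  | succ a ih =>
    by_cases hprev : 0 < b ∧ R a (b - 1)
    · obtain ⟨b, rfl⟩ := Nat.exists_eq_succ_of_ne_zero hprev.1.ne'
      have hlonger : IsRun R a b (1 + l) := isRun_add.2 ⟨isRun_one.2 hprev.2, hrun⟩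
      obtain ⟨i, j, k, rfl, rfl, hmax, hstart⟩ := ih hlonger
      exact ⟨i, j, k + 1, rfl, rfl, by rwa [← add_assoc, add_right_comm, add_comm l], hstart⟩
    · exact ⟨a + 1, b, 0, rfl, rfl, hrun, fun _ hb hR ↦ hprev ⟨hb, hR⟩⟩

end Runs

section Counting

variable (R : ℕ → ℕ → Prop) (n ℓ : ℕ)

open Classical in
/-- The off-diagonal points at which the last `ℓ` entries of a maximal run inside the `n × n` plot
start; such a run is allowed to end at the border of the plot. -/
noncomputable def lineTails : Finset (ℕ × ℕ) :=
  {p ∈ range n ×ˢ range n | p.1 + ℓ ≤ n ∧ p.2 + ℓ ≤ n ∧ p.1 ≠ p.2 ∧ IsRun R p.1 p.2 ℓ ∧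
    (max p.1 p.2 + ℓ < n → ¬ R (p.1 + ℓ) (p.2 + ℓ))}

open Classical in
/-- The points of the `n × n` plot at which a run of length `ℓ` starts. The run itself may leave the
plot, as it does in the correlation sum. -/
noncomputable def runStarts : Finset (ℕ × ℕ) :=
  {p ∈ range n ×ˢ range n | IsRun R p.1 p.2 ℓ}

/-- The off-diagonal points in the last `ℓ` rows or columns of the `n × n` plot: the only points at
which `lineTails` and the correlation sums may disagree. -/
def borderStrip : Finset (ℕ × ℕ) :=
  {p ∈ (range n).offDiag | n ≤ max p.1 p.2 + ℓ}

lemma runStarts_succ_subset : runStarts R n (ℓ + 1) ⊆ runStarts R n ℓ := by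
  classical
  exact monotone_filter_right _ fun _ _ h ↦ (isRun_succ.1 h).1

lemma card_borderStrip_le : #(borderStrip n ℓ) ≤ 2 * ℓ * (n - 1) := by
  -- Off the diagonal the smaller coordinate is at most `n - 2`.
  have hcover : borderStrip n ℓ ⊆
      range (n - 1) ×ˢ Ico (n - ℓ) n ∪ Ico (n - ℓ) n ×ˢ range (n - 1) := by
    intro p hp
    simp only [borderStrip, mem_filter, mem_offDiag, mem_range] at hp
    simp only [mem_union, mem_product, mem_range, mem_Ico]
    omega
  have hwidth : n - (n - ℓ) ≤ ℓ := by omega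
  calc #(borderStrip n ℓ)
      ≤ (n - 1) * (n - (n - ℓ)) + (n - (n - ℓ)) * (n - 1) := by
        simpa using (card_le_card hcover).trans (card_union_le _ _)
    _ ≤ (n - 1) * ℓ + ℓ * (n - 1) := by gcongr
    _ = 2 * ℓ * (n - 1) := by ring

variable {R n ℓ}

lemma mem_lineTails_iff_mem_sdiff_runStarts (hR : ∀ i, R i i) {p : ℕ × ℕ}
    (hp : p ∉ borderStrip n ℓ) :
    p ∈ lineTails R n ℓ ↔ p ∈ runStarts R n ℓ \ runStarts R n (ℓ + 1) := by
  have hdiag : ¬ R (p.1 + ℓ) (p.2 + ℓ) → p.1 ≠ p.2 := fun h heq ↦ h (heq ▸ hR _)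
  simp only [borderStrip, mem_filter, mem_offDiag, mem_range] at hp
  simp only [lineTails, runStarts, Finset.mem_sdiff, mem_filter, mem_product, mem_range,
    isRun_succ]
  grind

lemma abs_card_sub_card_le_of_forall_notMem {α : Type*} {s t u : Finset α}
    (h : ∀ a ∉ u, a ∈ s ↔ a ∈ t) : |(#s : ℝ) - #t| ≤ #u := by
  classical
  have hst : #s ≤ #t + #u := (card_le_card (by grind)).trans (card_union_le t u)
  have hts : #t ≤ #s + #u := (card_le_card (by grind)).trans (card_union_le s u)
  rw [abs_sub_le_iff, sub_le_iff_le_add', sub_le_iff_le_add']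
  exact ⟨mod_cast hst, mod_cast hts⟩

lemma abs_card_lineTails_sub_card_sdiff_runStarts_le (hR : ∀ i, R i i) :
    |(#(lineTails R n ℓ) : ℝ) - #(runStarts R n ℓ \ runStarts R n (ℓ + 1))| ≤
      (2 * ℓ * (n - 1) : ℕ) :=
  (abs_card_sub_card_le_of_forall_notMem
    fun _ ↦ mem_lineTails_iff_mem_sdiff_runStarts hR).trans
    (Nat.cast_le.2 (card_borderStrip_le n ℓ))

end Counting

section RecurrencePlot

variable {X : Type*} {d : X → X → ℝ} {f : X → X} {x : X} {n ℓ : ℕ} {ε : ℝ}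

lemma IsLine.start_le_of_end_eq {i j l i' j' l' : ℕ} (h : IsLine d f x n ε i j l)
    (h' : IsLine d f x n ε i' j' l') (hi : i + l = i' + l') (hj : j + l = j' + l') : i' ≤ i := by
  obtain ⟨-, -, -, -, hrun, -⟩ := h
  obtain ⟨hl', -, -, -, -, hstart', -⟩ := h'
  by_contra! hlt
  obtain ⟨s, rfl⟩ := Nat.exists_eq_add_of_lt hlt
  obtain rfl : j' = j + s + 1 := by omega
  exact hstart' (Nat.succ_pos _) (Nat.succ_pos _) (hrun s (by omega))

lemma IsLine.start_eq_of_end_eq {i j l i' j' l' : ℕ} (h : IsLine d f x n ε i j l)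
    (h' : IsLine d f x n ε i' j' l') (hi : i + l = i' + l') (hj : j + l = j' + l') : i = i' :=
  le_antisymm (h'.start_le_of_end_eq h hi.symm hj.symm) (h.start_le_of_end_eq h' hi hj)

lemma IsLine.mem_lineTails {i j k : ℕ} (hℓ : 1 ≤ ℓ) (h : IsLine d f x n ε i j (ℓ + k)) :
    (i + k, j + k) ∈ lineTails (RPone d f x ε) n ℓ := by
  obtain ⟨-, hi, hj, hij, hrun, -, hend⟩ := h
  have htail : IsRun (RPone d f x ε) (i + k) (j + k) ℓ :=
    (isRun_add.1 (add_comm ℓ k ▸ hrun)).2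
  simp only [lineTails, mem_filter, mem_product, mem_range]
  refine ⟨by omega, by omega, by omega, by omega, htail, fun hlt ↦ ?_⟩
  rw [add_assoc, add_assoc, add_comm k]
  exact hend (by omega)

lemma exists_isLine_of_mem_lineTails {a b : ℕ} (hℓ : 1 ≤ ℓ)
    (h : (a, b) ∈ lineTails (RPone d f x ε) n ℓ) :
    ∃ i j k, i + k = a ∧ j + k = b ∧ IsLine d f x n ε i j (ℓ + k) := by
  simp only [lineTails, mem_filter] at h
  obtain ⟨-, ha, hb, hab, hrun, hend⟩ := h
  obtain ⟨i, j, k, rfl, rfl, hline, hstart⟩ := hrun.exists_backward_maximal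
  refine ⟨i, j, k, rfl, rfl, by omega, by omega, by omega, by omega, hline, hstart, fun hlt ↦ ?_⟩
  rw [add_comm ℓ, ← add_assoc, ← add_assoc]
  exact hend (by omega)

open Classical in
variable (d f x n ε) in
/-- The starting points of the diagonal lines of length exactly `l`, as a finset. -/
noncomputable def lineStarts (l : ℕ) : Finset (ℕ × ℕ) :=
  {p ∈ range n ×ˢ range n | IsLine d f x n ε p.1 p.2 l}

lemma mem_lineStarts {l : ℕ} {p : ℕ × ℕ} :
    p ∈ lineStarts d f x n ε l ↔ IsLine d f x n ε p.1 p.2 l := by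
  simp only [lineStarts, mem_filter, mem_product, mem_range, and_iff_right_iff_imp]
  rintro ⟨hl, hi, hj, -⟩
  omega

lemma Nlines_eq_card_lineStarts (l : ℕ) :
    Nlines d f x n ε l = #(lineStarts d f x n ε l) := by
  rw [Nlines, ← Set.ncard_coe_finset]
  congr 1
  ext p
  exact mem_lineStarts.symm

lemma Nlines_eq_zero_of_lt {l : ℕ} (h : n < l) : Nlines d f x n ε l = 0 := by
  rw [Nlines_eq_card_lineStarts, card_eq_zero, eq_empty_iff_forall_notMem]
  intro p hp
  obtain ⟨-, hle, -⟩ := mem_lineStarts.1 hp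
  omega

lemma sum_Nlines_eq_card_lineTails (hℓ : 1 ≤ ℓ) :
    ∑ k ∈ range n, Nlines d f x n ε (ℓ + k) = #(lineTails (RPone d f x ε) n ℓ) := by
  simp only [Nlines_eq_card_lineStarts]
  rw [← card_sigma]
  refine card_bij (fun q _ ↦ (q.2.1 + q.1, q.2.2 + q.1)) ?maps ?inj ?surj
  case maps =>
    rintro ⟨k, i, j⟩ hq
    exact (mem_lineStarts.1 (mem_sigma.1 hq).2).mem_lineTails hℓ
  case inj =>
    rintro ⟨k, i, j⟩ hq ⟨k', i', j'⟩ hq' heq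
    have hline := mem_lineStarts.1 (mem_sigma.1 hq).2
    have hline' := mem_lineStarts.1 (mem_sigma.1 hq').2
    obtain ⟨hi, hj⟩ := Prod.mk.injEq .. ▸ heq
    obtain rfl : i = i' := hline.start_eq_of_end_eq hline' (by grind) (by grind)
    obtain rfl : k = k' := Nat.add_left_cancel hi
    obtain rfl : j = j' := Nat.add_right_cancel hj
    rfl
  case surj =>
    rintro ⟨a, b⟩ hp
    obtain ⟨i, j, k, rfl, rfl, hline⟩ := exists_isLine_of_mem_lineTails hℓ hp
    have hk : k < n := by
      obtain ⟨-, hle, -⟩ := hline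
      omega
    exact ⟨⟨k, i, j⟩, mem_sigma.2 ⟨mem_range.2 hk, mem_lineStarts.2 hline⟩, rfl⟩

lemma PlineGe_eq_card_lineTails_div (hℓ : 1 ≤ ℓ) :
    PlineGe d f x n ε ℓ = #(lineTails (RPone d f x ε) n ℓ) / ((n : ℝ) ^ 2 - n) := by
  have hvanish : ∀ k ∉ range n, Pline d f x n ε (ℓ + k) = 0 := by
    intro k hk
    rw [mem_range] at hk
    rw [Pline, Nlines_eq_zero_of_lt (by omega), Nat.cast_zero, zero_div]
  rw [PlineGe, tsum_eq_sum hvanish, ← sum_Nlines_eq_card_lineTails hℓ, Nat.cast_sum, sum_div]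
  rfl

lemma corrSum_eq_card_runStarts_div (l : ℕ) :
    corrSum d f x l n ε = #(runStarts (RPone d f x ε) n l) / (n : ℝ) ^ 2 := by
  rw [corrSum, ← Set.ncard_coe_finset]
  congr 3
  ext p
  simp only [runStarts, coe_filter, mem_product, mem_range, and_assoc]
  rfl

lemma corrSum_sub_corrSum_succ :
    corrSum d f x ℓ n ε - corrSum d f x (ℓ + 1) n ε =
      #(runStarts (RPone d f x ε) n ℓ \ runStarts (RPone d f x ε) n (ℓ + 1)) / (n : ℝ) ^ 2 := by
  rw [corrSum_eq_card_runStarts_div, corrSum_eq_card_runStarts_div, ← sub_div,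
    cast_card_sdiff (runStarts_succ_subset _ n ℓ)]

end RecurrencePlot

end RQA

open scoped Finset in
theorem PlineGe_eq_corrSum_general {X : Type*} (d : X → X → ℝ) (f : X → X) (x : X)
    (ℓ n : ℕ) (hℓ : 1 ≤ ℓ) (hn : 2 ≤ n) (ε : ℝ) (hrefl : ∀ i, RPone d f x ε i i) :
    ∃ δ : ℝ, |δ| ≤ 2 * (ℓ : ℝ) / (n : ℝ) ∧
      PlineGe d f x n ε ℓ =
        ((n : ℝ) / ((n : ℝ) - 1)) *
          (corrSum d f x ℓ n ε - corrSum d f x (ℓ + 1) n ε) + δ := by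
  have hn_pos : (0 : ℝ) < n := by positivity
  have hn_sub_pos : (0 : ℝ) < (n : ℝ) - 1 := sub_pos.2 (Nat.one_lt_cast.2 hn)
  have hfactor : (n : ℝ) ^ 2 - n = n * (n - 1) := by ring
  have hcard := abs_card_lineTails_sub_card_sdiff_runStarts_le (n := n) (ℓ := ℓ) hrefl
  push_cast [Nat.cast_sub (one_le_two.trans hn)] at hcard
  rw [PlineGe_eq_card_lineTails_div hℓ, corrSum_sub_corrSum_succ, hfactor]
  set tails := (#(lineTails (RPone d f x ε) n ℓ) : ℝ)
  set breaks :=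
    (#(runStarts (RPone d f x ε) n ℓ \ runStarts (RPone d f x ε) n (ℓ + 1)) : ℝ)
  refine ⟨(tails - breaks) / (n * (n - 1)), ?_, by field_simp; ring⟩
  calc |(tails - breaks) / (n * (n - 1))|
      = |tails - breaks| / (n * (n - 1)) := by
        rw [abs_div, abs_of_pos (mul_pos hn_pos hn_sub_pos)]
    _ ≤ 2 * ℓ * (n - 1) / (n * (n - 1)) := by gcongr
    _ = 2 * ℓ / n := mul_div_mul_right _ _ hn_sub_pos.ne'

/-- Number of long lines via correlation sums:
P≥_ℓ(x,n,ε) = (n/(n−1))·[C_ℓ − C_{ℓ+1}] + δ with |δ| ≤ 2ℓ/n. -/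
theorem PlineGe_eq_corrSum
    {X : Type*} [MetricSpace X] (f : X → X) (x : X)
    (ℓ n : ℕ) (hℓ : 1 ≤ ℓ) (hn : 2 ≤ n) (ε : ℝ) (hε : 0 < ε) :
    ∃ δ : ℝ, |δ| ≤ 2 * (ℓ : ℝ) / (n : ℝ) ∧
      PlineGe dist f x n ε ℓ =
        ((n : ℝ) / ((n : ℝ) - 1)) *
          (corrSum dist f x ℓ n ε - corrSum dist f x (ℓ + 1) n ε) + δ :=
  PlineGe_eq_corrSum_general dist f x ℓ n hℓ hn ε fun _ ↦ (dist_self _).trans_le hε.le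
end
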